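/- arXiv:2001.09836 — 3 statements merged into one kernel-verified Lean document; each statement's English description precedes it below -/
import Mathlib

section
/- Fix a finite connected simple graph G=(V,E) with growth rate γ(G). Then there exists σ² = σ²(G) ∈ [0,∞) such that (max_{x∈V} H_{x,n} − n·γ(G)/#V)/n^{1/2} converges in distribution to the centred normal distribution N(0,σ²) as n → ∞ (interpreting N(0,0) as the Dirac measure at 0), and the same convergence with the same constant σ² holds with max_{x∈V} H_{x,n} replaced by min_{x∈V} H_{x,n}. Moreover σ²(G) = 0 if and only if G is isomorphic to the complete graph on #V vertices. (Theorem 2.) -/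
open MeasureTheory Filter Topology
open scoped ENNReal NNReal Classical

/-- The ballistic deposition height process on a graph `G`, started from `h0`,
driven by the sequence of chosen vertices `X`. -/
noncomputable def heightProcess {V : Type*} [Fintype V] (G : SimpleGraph V)
    (h0 : V → ℕ) (X : ℕ → V) : ℕ → V → ℕ
  | 0 => h0
  | n + 1 => fun x =>
      if x = X n then
        1 + Finset.univ.sup (fun y =>
          if y = x ∨ G.Adj x y then heightProcess G h0 X n y else 0)
      else heightProcess G h0 X n x

/-- `X` is an i.i.d. sequence of uniformly distributed `V`-valued random variables on `(Ω, μ)`: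
every finite cylinder event has the product-of-uniform probabilities. -/
def IsUniformIID {V : Type*} [Fintype V] {Ω : Type*} [MeasurableSpace Ω]
    (μ : Measure Ω) (X : ℕ → Ω → V) : Prop :=
  (∀ (n : ℕ) (v : V), MeasurableSet {ω | X n ω = v}) ∧
  (∀ (n : ℕ) (f : ℕ → V), μ {ω | ∀ k < n, X k ω = f k} = (Fintype.card V : ℝ≥0∞)⁻¹ ^ n)

/-- `γ` is the growth rate of `G`: `γ > 0` and, for any i.i.d. uniform driving sequence,
almost surely `(#V/n) · max_x H_{x,n} → γ` and `(#V/n) · min_x H_{x,n} → γ`. -/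
def IsGrowthRate {V : Type*} [Fintype V] (G : SimpleGraph V) (γ : ℝ) : Prop :=
  0 < γ ∧
  ∀ {Ω : Type} [MeasurableSpace Ω] (μ : Measure Ω) [IsProbabilityMeasure μ]
    (X : ℕ → Ω → V), IsUniformIID μ X →
    (∀ᵐ ω ∂μ, Tendsto (fun n : ℕ =>
        (Fintype.card V : ℝ) *
          (⨆ x : V, (heightProcess G (fun _ => 0) (fun k => X k ω) n x : ℝ)) / n)
      atTop (𝓝 γ)) ∧
    (∀ᵐ ω ∂μ, Tendsto (fun n : ℕ =>
        (Fintype.card V : ℝ) *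
          (⨅ x : V, (heightProcess G (fun _ => 0) (fun k => X k ω) n x : ℝ)) / n)
      atTop (𝓝 γ))


namespace BD

section Det

variable {V : Type} [Fintype V] (G : SimpleGraph V)

/-- One update step at vertex `v`. -/
noncomputable def upd (h : V → ℕ) (v : V) : V → ℕ := fun x =>
  if x = v then
    1 + Finset.univ.sup (fun y => if y = x ∨ G.Adj x y then h y else 0)
  else h x

/-- Run the dynamics along a finite word. -/
noncomputable def run (h : V → ℕ) (l : List V) : V → ℕ := l.foldl (upd G) h

/-- Maximum height. -/
noncomputable def mx (h : V → ℕ) : ℕ := Finset.univ.sup h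

/-- Minimum height. -/
noncomputable def mn [Nonempty V] (h : V → ℕ) : ℕ := Finset.univ.inf' Finset.univ_nonempty h

lemma upd_of_ne (h : V → ℕ) {v x : V} (hx : x ≠ v) : upd G h v x = h x := by
  simp [upd, hx]

lemma upd_spec (h : V → ℕ) (v : V) :
    ∃ y, (y = v ∨ G.Adj v y) ∧ upd G h v v = 1 + h y ∧
      ∀ z, (z = v ∨ G.Adj v z) → h z ≤ h y := by
  obtain ⟨y, -, hy⟩ := Finset.exists_mem_eq_sup Finset.univ ⟨v, Finset.mem_univ v⟩
    (fun y => if y = v ∨ G.Adj v y then h y else 0)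
  have hle : ∀ z, (z = v ∨ G.Adj v z) → h z ≤ (if y = v ∨ G.Adj v y then h y else 0) := by
    intro z hz
    rw [← hy]
    have := Finset.le_sup (f := fun y => if y = v ∨ G.Adj v y then h y else 0) (Finset.mem_univ z)
    simpa [hz] using this
  by_cases hn : y = v ∨ G.Adj v y
  · refine ⟨y, hn, ?_, ?_⟩
    · simp only [upd, if_true]; rw [hy]; simp [hn]
    · intro z hz; simpa [hn] using hle z hz
  · refine ⟨v, Or.inl rfl, ?_, ?_⟩
    · have := hle v (Or.inl rfl)
      simp only [upd, if_true]; rw [hy]; simp only [hn, if_false] at this ⊢; omega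
    · intro z hz; have := hle z hz; simp only [hn, if_false] at this; omega

lemma upd_mono {h h' : V → ℕ} (hh : ∀ x, h x ≤ h' x) (v : V) (x : V) :
    upd G h v x ≤ upd G h' v x := by
  by_cases hx : x = v
  · subst hx
    obtain ⟨y, hy, e, -⟩ := upd_spec G h x
    obtain ⟨y', -, e', m'⟩ := upd_spec G h' x
    have := m' y hy
    have := hh y
    omega
  · rw [upd_of_ne G h hx, upd_of_ne G h' hx]; exact hh x

lemma upd_add (h : V → ℕ) (c : ℕ) (v : V) :
    upd G (fun x => h x + c) v = fun x => upd G h v x + c := by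
  funext x
  by_cases hx : x = v
  · subst hx
    obtain ⟨y, hy, e, m⟩ := upd_spec G h x
    obtain ⟨y', hy', e', m'⟩ := upd_spec G (fun x => h x + c) x
    have := m' y hy
    have := m y' hy'
    omega
  · rw [upd_of_ne G _ hx, upd_of_ne G h hx]

lemma le_upd (h : V → ℕ) (v x : V) : h x ≤ upd G h v x := by
  by_cases hx : x = v
  · subst hx
    obtain ⟨y, hy, e, m⟩ := upd_spec G h x
    have := m x (Or.inl rfl)
    omega
  · rw [upd_of_ne G h hx]

lemma le_mx (h : V → ℕ) (x : V) : h x ≤ mx h := Finset.le_sup (f := h) (Finset.mem_univ x)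

lemma mx_le {h : V → ℕ} {c : ℕ} (H : ∀ x, h x ≤ c) : mx h ≤ c :=
  Finset.sup_le fun x _ => H x

lemma mn_le [Nonempty V] (h : V → ℕ) (x : V) : mn h ≤ h x :=
  Finset.inf'_le h (Finset.mem_univ x)

lemma le_mn [Nonempty V] {h : V → ℕ} {c : ℕ} (H : ∀ x, c ≤ h x) : c ≤ mn h :=
  Finset.le_inf' _ _ fun x _ => H x

lemma exists_mx [Nonempty V] (h : V → ℕ) : ∃ x, h x = mx h := by
  obtain ⟨y, -, hy⟩ := Finset.exists_mem_eq_sup Finset.univ Finset.univ_nonempty h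
  exact ⟨y, hy.symm⟩

lemma upd_le (h : V → ℕ) (v x : V) : upd G h v x ≤ mx h + 1 := by
  by_cases hx : x = v
  · subst hx
    obtain ⟨y, hy, e, m⟩ := upd_spec G h x
    have := le_mx h y
    omega
  · rw [upd_of_ne G h hx]
    have := le_mx h x
    omega

@[simp] lemma run_nil (h : V → ℕ) : run G h [] = h := rfl

lemma run_cons (h : V → ℕ) (v : V) (l : List V) : run G h (v :: l) = run G (upd G h v) l := rfl

lemma run_append (h : V → ℕ) (l l' : List V) : run G h (l ++ l') = run G (run G h l) l' := by
  simp [run, List.foldl_append]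

lemma run_snoc (h : V → ℕ) (l : List V) (v : V) : run G h (l ++ [v]) = upd G (run G h l) v := by
  simp [run, List.foldl_append]

lemma run_mono {h h' : V → ℕ} (hh : ∀ x, h x ≤ h' x) (l : List V) (x : V) :
    run G h l x ≤ run G h' l x := by
  induction l generalizing h h' with
  | nil => exact hh x
  | cons v l ih => exact ih (upd_mono G hh v)

lemma run_add (h : V → ℕ) (c : ℕ) (l : List V) :
    run G (fun x => h x + c) l = fun x => run G h l x + c := by
  induction l generalizing h with
  | nil => rfl
  | cons v l ih => rw [run_cons, upd_add, ih, run_cons]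

lemma le_run (h : V → ℕ) (l : List V) (x : V) : h x ≤ run G h l x := by
  induction l generalizing h with
  | nil => exact le_rfl
  | cons v l ih => exact (le_upd G h v x).trans (ih _)

lemma mx_run_le (h : V → ℕ) (l : List V) : mx (run G h l) ≤ mx h + l.length := by
  induction l generalizing h with
  | nil => simp
  | cons v l ih =>
    have h1 := ih (upd G h v)
    have h2 : mx (upd G h v) ≤ mx h + 1 := mx_le fun x => upd_le G h v x
    rw [run_cons, List.length_cons]; omega

/-- Max height from the flat configuration. -/
noncomputable def M (l : List V) : ℕ := mx (run G (fun _ => 0) l)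

lemma M_le (l : List V) : M G l ≤ l.length := by
  have := mx_run_le G (fun _ => 0) l
  have h0 : mx (fun _ : V => 0) ≤ 0 := mx_le fun _ => le_rfl
  unfold M; omega

lemma mx_run_le_M (h : V → ℕ) (l : List V) : mx (run G h l) ≤ mx h + M G l := by
  refine mx_le fun x => ?_
  have h1 := run_mono G (h := h) (h' := fun _ => 0 + mx h) (fun y => by have := le_mx h y; omega) l x
  rw [run_add G (fun _ => 0) (mx h) l] at h1
  simp only at h1
  have := le_mx (run G (fun _ => 0) l) x
  unfold M; omega

lemma M_le_mx_run [Nonempty V] (h : V → ℕ) (l : List V) : mn h + M G l ≤ mx (run G h l) := by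
  obtain ⟨x, hx⟩ := exists_mx (run G (fun _ => 0) l)
  have h1 := run_mono G (h := fun _ => 0 + mn h) (h' := h) (fun y => by have := mn_le h y; omega) l x
  rw [run_add G (fun _ => 0) (mn h) l] at h1
  simp only at h1
  have := le_mx (run G h l) x
  unfold M; omega

lemma mn_le_mx [Nonempty V] (h : V → ℕ) : mn h ≤ mx h :=
  (mn_le h (Classical.arbitrary V)).trans (le_mx h _)

/-- Range of the heights. -/
noncomputable def rng [Nonempty V] (h : V → ℕ) : ℕ := mx h - mn h

lemma rng_run_le [Nonempty V] (h : V → ℕ) (l : List V) :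
    rng (run G h l) ≤ rng h + l.length := by
  have h1 := mx_run_le G h l
  have h2 : mn h ≤ mn (run G h l) := le_mn fun x => (mn_le h x).trans (le_run G h l x)
  unfold rng; omega

/-- The chain relation. -/
def R (x y : V) : Prop := y = x ∨ G.Adj x y

/-- After a chain, the last vertex dominates all visited vertices. -/
lemma chain_last (h : V → ℕ) (l : List V) (v : V) (hc : List.IsChain (R G) (l ++ [v])) :
    ∀ x ∈ l ++ [v], run G h (l ++ [v]) x ≤ run G h (l ++ [v]) v := by
  induction l using List.reverseRecOn generalizing v with
  | nil => simp
  | append_singleton l u ih =>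
    have hc' : List.IsChain (R G) (l ++ [u]) := hc.left_of_append
    have huv : R G u v := by
      have := hc
      rw [List.append_assoc] at this
      have := this.right_of_append
      simpa using this
    have ih' := ih u hc'
    intro x hx
    rw [run_snoc]
    by_cases hxv : x = v
    · subst hxv; exact le_rfl
    · have hx' : x ∈ l ++ [u] := by
        simp only [List.mem_append, List.mem_singleton] at hx ⊢
        tauto
      rw [upd_of_ne G _ hxv]
      obtain ⟨y, hy, e, m⟩ := upd_spec G (run G h (l ++ [u])) v
      have := m u (by rcases huv with h | h
                      · exact Or.inl h.symm
                      · exact Or.inr h.symm)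
      have := ih' x hx'
      omega

/-- Starting from a configuration maximal at `o`, a chain from `o` acts deterministically. -/
lemma chain_det (h : V → ℕ) (o : V) (ho : ∀ x, h x ≤ h o) (l : List V) (v : V)
    (hc : List.IsChain (R G) (o :: (l ++ [v]))) :
    run G h (l ++ [v]) v = h o + (l.length + 1) ∧ (∀ x, run G h (l ++ [v]) x ≤ h o + (l.length + 1)) ∧
    (∀ x ∈ l ++ [v], run G h (l ++ [v]) x = h o + run G (fun _ => 0) (l ++ [v]) x) := by
  have key : ∀ (h : V → ℕ) (ho : ∀ x, h x ≤ h o) (l : List V) (v : V)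
    (hc : List.IsChain (R G) (o :: (l ++ [v]))),
    run G h (l ++ [v]) v = h o + (l.length + 1) ∧
    (∀ x, run G h (l ++ [v]) x ≤ h o + (l.length + 1)) := by
    intro h ho l v
    induction l using List.reverseRecOn generalizing v with
    | nil =>
      intro hc
      have hov : R G o v := by simpa using hc
      obtain ⟨y, hy, e, m⟩ := upd_spec G h v
      have h1 := m o (by rcases hov with h | h
                         · exact Or.inl h.symm
                         · exact Or.inr h.symm)
      have h2 := ho y
      have h3 : run G h ([] ++ [v]) v = h o + ([].length (α := V) + 1) := by
        rw [run_snoc, run_nil, e, List.length_nil]; omega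
      refine ⟨h3, fun x => ?_⟩
      by_cases hxv : x = v
      · subst hxv; exact h3.le
      · rw [run_snoc, run_nil, upd_of_ne G _ hxv]; have := ho x; omega
    | append_singleton l u ih =>
      intro hc
      have hc' : List.IsChain (R G) (o :: (l ++ [u])) := by
        have : o :: (l ++ [u] ++ [v]) = (o :: (l ++ [u])) ++ [v] := by simp
        rw [this] at hc
        exact hc.left_of_append
      have huv : R G u v := by
        have : o :: (l ++ [u] ++ [v]) = (o :: l) ++ [u, v] := by simp
        rw [this] at hc
        simpa using hc.right_of_append
      obtain ⟨i1, i2⟩ := ih u hc'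
      obtain ⟨y, hy, e, m⟩ := upd_spec G (run G h (l ++ [u])) v
      have h1 := m u (by rcases huv with h | h
                         · exact Or.inl h.symm
                         · exact Or.inr h.symm)
      have h2 := i2 y
      have h3 : run G h (l ++ [u] ++ [v]) v = h o + ((l ++ [u]).length + 1) := by
        rw [run_snoc, e]; simp only [List.length_append, List.length_singleton]; omega
      refine ⟨h3, fun x => ?_⟩
      by_cases hxv : x = v
      · subst hxv; exact h3.le
      · rw [run_snoc, upd_of_ne G _ hxv]; have := i2 x
        simp only [List.length_append, List.length_singleton]; omega
  refine ⟨(key h ho l v hc).1, (key h ho l v hc).2, ?_⟩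
  induction l using List.reverseRecOn generalizing v with
  | nil =>
    intro x hx
    have hx' : x = v := by simpa using hx
    subst hx'
    rw [(key h ho [] x hc).1, (key (fun _ => 0) (fun _ => le_rfl) [] x hc).1]; omega
  | append_singleton l u ih =>
    intro x hx
    by_cases hxv : x = v
    · subst hxv
      rw [(key h ho _ x hc).1, (key (fun _ => 0) (fun _ => le_rfl) _ x hc).1]; omega
    · have hc' : List.IsChain (R G) (o :: (l ++ [u])) := by
        have : o :: (l ++ [u] ++ [v]) = (o :: (l ++ [u])) ++ [v] := by simp
        rw [this] at hc
        exact hc.left_of_append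
      rw [run_snoc G h, run_snoc G (fun _ => 0), upd_of_ne G _ hxv, upd_of_ne G _ hxv]
      refine ih u hc' x ?_
      simp only [List.mem_append, List.mem_singleton] at hx ⊢
      tauto

/-- There is a covering closed chain. -/
lemma exists_cover (hG : G.Connected) (o : V) :
    ∃ l : List V, List.IsChain (R G) (o :: (l ++ [o])) ∧ ∀ x, x ∈ l ++ [o] := by
  have key : ∀ s : Finset V, ∃ p : G.Walk o o, ∀ x ∈ s, x ∈ p.support := by
    intro s
    induction s using Finset.induction_on with
    | empty => exact ⟨SimpleGraph.Walk.nil, by simp⟩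
    | insert a s _ ih =>
      obtain ⟨p, hp⟩ := ih
      obtain ⟨q⟩ := hG.preconnected o a
      refine ⟨p.append (q.append q.reverse), ?_⟩
      intro x hx
      rw [SimpleGraph.Walk.mem_support_append_iff, SimpleGraph.Walk.mem_support_append_iff]
      rcases Finset.mem_insert.1 hx with rfl | h
      · exact Or.inr (Or.inl q.end_mem_support)
      · exact Or.inl (hp x h)
  obtain ⟨p, hp⟩ := key Finset.univ
  refine ⟨p.support, ?_, fun x => List.mem_append_left _ (hp x (Finset.mem_univ x))⟩
  have h1 : List.IsChain (R G) p.support :=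
    p.isChain_adj_support.imp fun a b hab => Or.inr hab
  have hne := p.support_ne_nil
  have h2 : List.IsChain (R G) (p.support ++ [o]) := by
    rw [List.isChain_append]
    refine ⟨h1, by simp, ?_⟩
    intro x hx y hy
    have hl : p.support.getLast? = some o := by
      rw [List.getLast?_eq_getLast_of_ne_nil hne]; simp
    rw [hl] at hx
    simp at hx hy
    subst hx; subst hy; exact Or.inl rfl
  have hh : p.support = o :: p.support.tail := by simp
  rw [hh] at h2 ⊢
  exact List.IsChain.cons_cons (Or.inl rfl) h2

/-- The regeneration word. -/
lemma exists_regen [Nonempty V] (hG : G.Connected) :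
    ∃ W : List V, W ≠ [] ∧ ∃ c : V → ℕ, (∀ h, ∃ m : ℕ, run G h W = fun x => c x + m) ∧
      ∀ h, rng (run G h W) ≤ W.length := by
  obtain ⟨o⟩ := ‹Nonempty V›
  obtain ⟨l, hc, hcov⟩ := exists_cover G hG o
  have main : ∀ h, ∃ m : ℕ, run G h ((l ++ [o]) ++ (l ++ [o])) =
      fun x => run G (fun _ => 0) (l ++ [o]) x + m := by
    intro h
    refine ⟨run G h (l ++ [o]) o, ?_⟩
    funext x
    rw [run_append]
    have hmax : ∀ x, run G h (l ++ [o]) x ≤ run G h (l ++ [o]) o :=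
      fun x => chain_last G h l o hc.tail x (hcov x)
    rw [(chain_det G _ o hmax l o hc).2.2 x (hcov x), add_comm]
  refine ⟨(l ++ [o]) ++ (l ++ [o]), by simp, run G (fun _ => 0) (l ++ [o]), main, ?_⟩
  intro h
  obtain ⟨m, hm⟩ := main h
  rw [hm]
  have h1 : mx (fun x => run G (fun _ => 0) (l ++ [o]) x + m) ≤ (l ++ [o]).length + m := by
    refine mx_le fun x => ?_
    have := le_mx (run G (fun _ => 0) (l ++ [o])) x
    have h3 := M_le G (l ++ [o])
    unfold M at h3
    omega
  have h2 : m ≤ mn (fun x => run G (fun _ => 0) (l ++ [o]) x + m) := le_mn fun x => by simp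
  unfold rng
  rw [List.length_append]
  omega

lemma run_replicate_ge (h : V → ℕ) (a : V) (n : ℕ) :
    h a + n ≤ run G h (List.replicate n a) a := by
  induction n generalizing h with
  | zero => simp
  | succ n ih =>
    rw [List.replicate_succ, run_cons]
    have := ih (upd G h a)
    obtain ⟨y, hy, e, m⟩ := upd_spec G h a
    have := m a (Or.inl rfl)
    omega

lemma run_alt_le (h : V → ℕ) {a b : V} (hab : a ≠ b) (hadj : ¬ G.Adj a b) (m : ℕ)
    (hm : ∀ x, h x ≤ m) (n : ℕ) :
    (∀ x, x ≠ a → x ≠ b → run G h ((List.replicate n [a, b]).flatten) x ≤ m) ∧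
    run G h ((List.replicate n [a, b]).flatten) a ≤ m + n ∧
    run G h ((List.replicate n [a, b]).flatten) b ≤ m + n := by
  induction n with
  | zero => simp [hm]
  | succ n ih =>
    obtain ⟨i1, i2, i3⟩ := ih
    set g := run G h ((List.replicate n [a, b]).flatten) with hg
    have e : run G h ((List.replicate (n+1) [a, b]).flatten) = upd G (upd G g a) b := by
      rw [List.replicate_succ', List.flatten_append, run_append, ← hg]; rfl
    have hba : b ≠ a := hab.symm
    have hadj' : ¬ G.Adj b a := fun h => hadj h.symm
    have ha : upd G g a a ≤ m + (n + 1) := by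
      obtain ⟨y, hy, e, -⟩ := upd_spec G g a
      rcases hy with rfl | hy
      · omega
      · have h1 : y ≠ a := fun h => G.loopless.irrefl a (h ▸ hy)
        have h2 : y ≠ b := fun h => hadj (h ▸ hy)
        have := i1 y h1 h2
        omega
    have hb : upd G (upd G g a) b b ≤ m + (n + 1) := by
      obtain ⟨y, hy, e, -⟩ := upd_spec G (upd G g a) b
      rcases hy with rfl | hy
      · rw [upd_of_ne G _ hba] at e; omega
      · have h1 : y ≠ b := fun h => G.loopless.irrefl b (h ▸ hy)
        have h2 : y ≠ a := fun h => hadj' (h ▸ hy)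
        rw [upd_of_ne G _ h2] at e
        have := i1 y h2 h1
        omega
    rw [e]
    refine ⟨fun x hxa hxb => ?_, ?_, hb⟩
    · rw [upd_of_ne G _ hxb, upd_of_ne G _ hxa]; exact i1 x hxa hxb
    · rw [upd_of_ne G _ hab]; exact ha

/-- Two words of the same length acting differently, for non-complete graphs. -/
lemma exists_diff [Nonempty V] (hG : G.Connected) {a b : V} (hab : a ≠ b) (hadj : ¬ G.Adj a b) :
    ∃ w₁ w₂ : List V, w₁.length = w₂.length ∧ w₁ ≠ [] ∧
      ∀ h, ∃ δ : ℕ, 1 ≤ δ ∧ run G h w₁ = fun x => run G h w₂ x + δ := by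
  obtain ⟨W, hW, c, hc, hr⟩ := exists_regen G hG
  set j := 2 * W.length + 1 with hj
  set u₁ := List.replicate (2 * j) a with hu1
  set u₂ := (List.replicate j [a, b]).flatten with hu2
  have hl1 : u₁.length = 2 * j := by simp [hu1]
  have hl2 : u₂.length = 2 * j := by simp [hu2]; ring
  refine ⟨W ++ (u₁ ++ W), W ++ (u₂ ++ W), by simp [hl1, hl2], by simp [hW], ?_⟩
  intro h
  simp only [run_append]
  set g := run G h W with hg
  have hrg : mx g - mn g ≤ W.length := hr h
  obtain ⟨m1, e1⟩ := hc (run G g u₁)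
  obtain ⟨m2, e2⟩ := hc (run G g u₂)
  have b1 : mn g + 2 * j ≤ mx (run G (run G g u₁) W) := by
    have h1 := run_replicate_ge G g a (2 * j)
    have h2 := le_run G (run G g u₁) W a
    have h3 := le_mx (run G (run G g u₁) W) a
    have h4 := mn_le g a
    rw [← hu1] at h1
    omega
  have b2 : mx (run G (run G g u₂) W) ≤ mx g + j + W.length := by
    have h1 := mx_run_le G (run G g u₂) W
    have h2 : mx (run G g u₂) ≤ mx g + j := by
      obtain ⟨i1, i2, i3⟩ := run_alt_le G g hab hadj (mx g) (le_mx g) j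
      refine mx_le fun x => ?_
      by_cases hxa : x = a
      · subst hxa; exact i2
      · by_cases hxb : x = b
        · subst hxb; exact i3
        · exact (i1 x hxa hxb).trans (by omega)
    omega
  have hlt : m2 < m1 := by
    by_contra hle
    push Not at hle
    have : mx (run G (run G g u₁) W) ≤ mx (run G (run G g u₂) W) := by
      refine mx_le fun x => ?_
      have := le_mx (run G (run G g u₂) W) x
      rw [e1]; rw [e2] at this ⊢
      simp only at this ⊢
      omega
    omega
  refine ⟨m1 - m2, by omega, ?_⟩
  rw [e1, e2]
  funext x
  simp only
  omega

lemma M_complete [Nonempty V] (hG : ∀ a b : V, a ≠ b → G.Adj a b) (l : List V) :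
    M G l = l.length := by
  refine le_antisymm (M_le G l) ?_
  induction l using List.reverseRecOn with
  | nil => simp
  | append_singleton l v ih =>
    unfold M at *
    rw [run_snoc]
    obtain ⟨x, hx⟩ := exists_mx (run G (fun _ => 0) l)
    obtain ⟨y, hy, e, m⟩ := upd_spec G (run G (fun _ => 0) l) v
    have h1 := m x (by by_cases h : x = v
                       · exact Or.inl h
                       · exact Or.inr (hG v x (Ne.symm h)))
    have h2 := le_mx (upd G (run G (fun _ => 0) l) v) v
    simp only [List.length_append, List.length_singleton]
    omega

lemma heightProcess_eq (X : ℕ → V) (n : ℕ) :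
    heightProcess G (fun _ => 0) X n = run G (fun _ => 0) ((List.range n).map X) := by
  induction n with
  | zero => rfl
  | succ n ih =>
    rw [List.range_succ, List.map_append, List.map_singleton, run_snoc, ← ih]
    rfl

lemma iSup_eq_mx [Nonempty V] (h : V → ℕ) : (⨆ x : V, (h x : ℝ)) = mx h := by
  obtain ⟨x, hx⟩ := exists_mx h
  refine le_antisymm (ciSup_le fun y => by exact_mod_cast le_mx h y) ?_
  rw [← hx]
  exact le_ciSup (f := fun x => (h x : ℝ)) (Set.finite_range _).bddAbove x

lemma iInf_eq_mn [Nonempty V] (h : V → ℕ) : (⨅ x : V, (h x : ℝ)) = mn h := by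
  obtain ⟨x, -, hx⟩ := Finset.exists_mem_eq_inf' Finset.univ_nonempty h
  refine le_antisymm ?_ (le_ciInf fun y => by exact_mod_cast mn_le h y)
  unfold mn
  rw [hx]
  exact ciInf_le (f := fun x => (h x : ℝ)) (Set.finite_range _).bddBelow x

end Det
section Expect

set_option linter.unusedSectionVars false

variable {V : Type} [Fintype V]

/-- Average of a function over all words of length `n`. -/
noncomputable def E {F : Type*} [AddCommGroup F] [Module ℝ F] : ℕ → (List V → F) → F
  | 0, f => f []
  | n + 1, f => ((Fintype.card V : ℝ)⁻¹) • ∑ v : V, E n (fun l => f (v :: l))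

section gen

variable {F : Type*} [AddCommGroup F] [Module ℝ F] {F' : Type*} [AddCommGroup F'] [Module ℝ F']

lemma E_congr {n : ℕ} {f g : List V → F} (h : ∀ l, l.length = n → f l = g l) :
    E n f = E n g := by
  induction n generalizing f g with
  | zero => exact h [] rfl
  | succ n ih =>
    simp only [E]
    congr 1
    exact Finset.sum_congr rfl fun v _ => ih fun l hl => h _ (by simp [hl])

lemma E_map (φ : F →ₗ[ℝ] F') (n : ℕ) (f : List V → F) :
    E n (fun l => φ (f l)) = φ (E n f) := by
  induction n generalizing f with
  | zero => rfl
  | succ n ih =>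
    simp only [E, ih, map_smul, map_sum]

lemma E_add (n : ℕ) (f g : List V → F) :
    E n (fun l => f l + g l) = E n f + E n g := by
  induction n generalizing f g with
  | zero => rfl
  | succ n ih =>
    simp only [E, ih, Finset.sum_add_distrib, smul_add]

lemma E_neg (n : ℕ) (f : List V → F) : E n (fun l => - f l) = - E n f :=
  E_map (-LinearMap.id : F →ₗ[ℝ] F) n f

lemma E_sub (n : ℕ) (f g : List V → F) :
    E n (fun l => f l - g l) = E n f - E n g := by
  simp only [sub_eq_add_neg]
  rw [E_add, E_neg]

lemma E_const [Nonempty V] (n : ℕ) (c : F) : E n (fun _ : List V => c) = c := by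
  induction n with
  | zero => rfl
  | succ n ih =>
    simp only [E, ih, Finset.sum_const, Finset.card_univ]
    rw [← Nat.cast_smul_eq_nsmul ℝ, smul_smul, inv_mul_cancel₀, one_smul]
    exact_mod_cast Fintype.card_ne_zero

lemma E_append (m n : ℕ) (f : List V → F) :
    E (m + n) f = E m (fun l => E n (fun l' => f (l ++ l'))) := by
  induction m generalizing f with
  | zero => simp only [Nat.zero_add, E, List.nil_append]
  | succ m ih =>
    rw [show m + 1 + n = (m + n) + 1 by omega]
    simp only [E, ih, List.cons_append]

end gen

lemma E_mul_left (n : ℕ) (c : ℝ) (f : List V → ℝ) : E n (fun l => c * f l) = c * E n f :=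
  E_map (LinearMap.mulLeft ℝ c) n f

lemma E_mul_left_C (n : ℕ) (c : ℂ) (f : List V → ℂ) : E n (fun l => c * f l) = c * E n f :=
  E_map (LinearMap.mulLeft ℝ c) n f

lemma E_mul_right_C (n : ℕ) (c : ℂ) (f : List V → ℂ) : E n (fun l => f l * c) = E n f * c :=
  E_map (LinearMap.mulRight ℝ c) n f

lemma E_ofReal (n : ℕ) (f : List V → ℝ) : E n (fun l => (f l : ℂ)) = (E n f : ℝ) :=
  E_map (Complex.ofRealCLM : ℝ →ₗ[ℝ] ℂ) n f

lemma E_mono {n : ℕ} {f g : List V → ℝ} (h : ∀ l, l.length = n → f l ≤ g l) :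
    E n f ≤ E n g := by
  induction n generalizing f g with
  | zero => exact h [] rfl
  | succ n ih =>
    simp only [E, smul_eq_mul]
    refine mul_le_mul_of_nonneg_left ?_ (by positivity)
    exact Finset.sum_le_sum fun v _ => ih fun l hl => h _ (by simp [hl])

lemma E_nonneg [Nonempty V] {n : ℕ} {f : List V → ℝ} (h : ∀ l, l.length = n → 0 ≤ f l) :
    0 ≤ E n f := by
  have := E_mono (f := fun _ => 0) h
  rwa [E_const] at this

lemma norm_E_le {F : Type*} [NormedAddCommGroup F] [NormedSpace ℝ F] (n : ℕ) (f : List V → F) :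
    ‖E n f‖ ≤ E n (fun l => ‖f l‖) := by
  induction n generalizing f with
  | zero => exact le_rfl
  | succ n ih =>
    simp only [E, norm_smul, smul_eq_mul]
    rw [Real.norm_of_nonneg (by positivity)]
    refine mul_le_mul_of_nonneg_left ?_ (by positivity)
    exact (norm_sum_le _ _).trans (Finset.sum_le_sum fun v _ => ih _)

lemma E_indicator [Nonempty V] (w : List V) (c : ℝ) :
    E w.length (fun l => if l = w then c else 0) = ((Fintype.card V : ℝ)⁻¹) ^ w.length * c := by
  induction w with
  | nil => simp [E]
  | cons v w ih =>
    simp only [List.length_cons, E, List.cons.injEq, smul_eq_mul]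
    rw [Finset.sum_eq_single v]
    · simp only [true_and]
      rw [ih]; ring
    · intro b _ hb
      simp only [hb, false_and, if_false]
      exact E_const _ _
    · simp

lemma le_E [Nonempty V] (w : List V) {f : List V → ℝ} (h : ∀ l, l.length = w.length → 0 ≤ f l) :
    ((Fintype.card V : ℝ)⁻¹) ^ w.length * f w ≤ E w.length f := by
  rw [← E_indicator]
  refine E_mono fun l hl => ?_
  split_ifs with hh
  · rw [hh]
  · exact h l hl

/-- The `L²` norm. -/
noncomputable def nrm (n : ℕ) (f : List V → ℝ) : ℝ := Real.sqrt (E n (fun l => f l ^ 2))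

lemma nrm_nonneg (n : ℕ) (f : List V → ℝ) : 0 ≤ nrm n f := Real.sqrt_nonneg _

variable [Nonempty V]

lemma nrm_sq (n : ℕ) (f : List V → ℝ) : nrm n f ^ 2 = E n (fun l => f l ^ 2) :=
  Real.sq_sqrt (E_nonneg fun _ _ => sq_nonneg _)

lemma nrm_congr {n : ℕ} {f g : List V → ℝ} (h : ∀ l, l.length = n → f l = g l) :
    nrm n f = nrm n g := by
  unfold nrm; rw [E_congr fun l hl => by rw [h l hl]]

lemma E_mul_le (n : ℕ) (f g : List V → ℝ) : E n (fun l => f l * g l) ≤ nrm n f * nrm n g := by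
  have key : ∀ c : ℝ, 0 ≤ (E n (fun l => g l ^ 2)) * (c * c) + (-2 * E n (fun l => f l * g l)) * c
      + E n (fun l => f l ^ 2) := by
    intro c
    have h := E_nonneg (n := n) (f := fun l => (f l - c * g l) ^ 2) fun _ _ => sq_nonneg _
    have e : E n (fun l => (f l - c * g l) ^ 2) =
        E n (fun l => (f l ^ 2 + (c * c) * g l ^ 2) + (-2 * c) * (f l * g l)) :=
      E_congr fun l _ => by ring
    rw [e, E_add, E_add, E_mul_left, E_mul_left] at h
    linarith
  have hd := discrim_le_zero key
  unfold discrim at hd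
  have h1 : E n (fun l => f l * g l) ^ 2 ≤ (nrm n f * nrm n g) ^ 2 := by
    rw [mul_pow, nrm_sq, nrm_sq]; linarith
  exact (abs_le_of_sq_le_sq' h1 (mul_nonneg (nrm_nonneg _ _) (nrm_nonneg _ _))).2

lemma nrm_add_le (n : ℕ) (f g : List V → ℝ) :
    nrm n (fun l => f l + g l) ≤ nrm n f + nrm n g := by
  have h0 := nrm_nonneg n f
  have h1 := nrm_nonneg n g
  refine abs_le_of_sq_le_sq' ?_ (by positivity) |>.2
  have e : E n (fun l => (f l + g l) ^ 2) =
      E n (fun l => (f l ^ 2 + g l ^ 2) + 2 * (f l * g l)) := E_congr fun l _ => by ring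
  rw [nrm_sq, e, E_add, E_add, E_mul_left, ← nrm_sq, ← nrm_sq]
  nlinarith [E_mul_le n f g]

lemma nrm_neg (n : ℕ) (f : List V → ℝ) : nrm n (fun l => - f l) = nrm n f := by
  unfold nrm; simp only [neg_sq]

lemma nrm_sub_le (n : ℕ) (f g : List V → ℝ) :
    nrm n (fun l => f l - g l) ≤ nrm n f + nrm n g := by
  have := nrm_add_le n f (fun l => - g l)
  rw [nrm_neg] at this
  simpa only [sub_eq_add_neg] using this

lemma abs_nrm_sub_le (n : ℕ) (f g : List V → ℝ) :
    |nrm n f - nrm n g| ≤ nrm n (fun l => f l - g l) := by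
  have h1 := nrm_add_le n (fun l => f l - g l) g
  have h2 := nrm_sub_le n f (fun l => f l - g l)
  simp only [sub_add_cancel, sub_sub_cancel] at h1 h2
  rw [abs_le]; constructor <;> linarith

lemma E_abs_le (n : ℕ) (f : List V → ℝ) : E n (fun l => |f l|) ≤ nrm n f := by
  have h := E_mul_le n (fun l => |f l|) (fun _ => 1)
  have h1 : nrm (V := V) n (fun _ => (1 : ℝ)) = 1 := by
    unfold nrm; rw [E_const]; simp
  have h2 : nrm n (fun l => |f l|) = nrm n f := by
    unfold nrm; simp only [sq_abs]
  rw [h1, h2] at h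
  simpa using h

lemma abs_E_le (n : ℕ) (f : List V → ℝ) : |E n f| ≤ nrm n f :=
  (norm_E_le n f).trans (E_abs_le n f)

lemma nrm_mono {n : ℕ} {f g : List V → ℝ} (h : ∀ l, l.length = n → |f l| ≤ |g l|) :
    nrm n f ≤ nrm n g :=
  Real.sqrt_le_sqrt (E_mono fun l hl => sq_le_sq.2 (h l hl))

lemma nrm_center_le (n : ℕ) (f : List V → ℝ) :
    nrm n (fun l => f l - E n f) ≤ nrm n f := by
  refine Real.sqrt_le_sqrt ?_
  have e : E n (fun l => (f l - E n f) ^ 2) =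
      E n (fun l => (f l ^ 2 + (-2 * E n f) * f l) + E n f ^ 2) := E_congr fun l _ => by ring
  rw [e, E_add, E_add, E_mul_left, E_const]
  nlinarith [sq_nonneg (E n f)]

/-- Marginal: function of an initial segment. -/
lemma E_take {F : Type*} [AddCommGroup F] [Module ℝ F] (m n : ℕ) (f : List V → F) :
    E (m + n) (fun l => f (l.take m)) = E m f := by
  rw [E_append]
  refine E_congr fun l hl => ?_
  rw [E_congr (g := fun _ => f l) fun l' _ => by rw [← hl, List.take_left], E_const]

lemma E_drop {F : Type*} [AddCommGroup F] [Module ℝ F] (m n : ℕ) (f : List V → F) :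
    E (m + n) (fun l => f (l.drop m)) = E n f := by
  rw [E_append, E_congr (g := fun _ => E n f), E_const]
  intro l hl
  exact E_congr fun l' _ => by rw [← hl, List.drop_left]

lemma E_take_mul_drop (m n : ℕ) (f g : List V → ℂ) :
    E (m + n) (fun l => f (l.take m) * g (l.drop m)) = E m f * E n g := by
  rw [E_append, ← E_mul_right_C]
  refine E_congr fun l hl => ?_
  rw [← E_mul_left_C]
  exact E_congr fun l' _ => by rw [← hl, List.take_left, List.drop_left]

lemma E_take_mul_drop_R (m n : ℕ) (f g : List V → ℝ) :
    E (m + n) (fun l => f (l.take m) * g (l.drop m)) = E m f * E n g := by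
  rw [E_append, mul_comm, ← E_mul_left]
  refine E_congr fun l hl => ?_
  rw [mul_comm, ← E_mul_left]
  exact E_congr fun l' _ => by rw [← hl, List.take_left, List.drop_left]

/-- Pythagoras for independent centred functions. -/
lemma nrm_indep_sq (m n : ℕ) (f g : List V → ℝ) (hf : E m f = 0) :
    nrm (m + n) (fun l => f (l.take m) + g (l.drop m)) ^ 2 = nrm m f ^ 2 + nrm n g ^ 2 := by
  rw [nrm_sq, nrm_sq, nrm_sq]
  have e : E (m + n) (fun l : List V => (f (l.take m) + g (l.drop m)) ^ 2) =
      E (m + n) (fun l => ((fun l => f l ^ 2) (l.take m) + (fun l => g l ^ 2) (l.drop m))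
        + 2 * (f (l.take m) * g (l.drop m))) := E_congr fun l _ => by ring
  rw [e, E_add, E_add, E_take m n (fun l => f l ^ 2), E_drop m n (fun l => g l ^ 2), E_mul_left,
    E_take_mul_drop_R, hf]
  ring

lemma nrm_take (m n : ℕ) (f : List V → ℝ) : nrm (m + n) (fun l => f (l.take m)) = nrm m f := by
  unfold nrm; rw [E_take m n (fun l => f l ^ 2)]

lemma nrm_drop (m n : ℕ) (f : List V → ℝ) : nrm (m + n) (fun l => f (l.drop m)) = nrm n f := by
  unfold nrm; rw [E_drop m n (fun l => f l ^ 2)]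

end Expect
section RangeBound

variable {V : Type} [Fintype V] [Nonempty V] (G : SimpleGraph V)

/-- Uniform second moment bound on the range of heights. -/
lemma exists_rng_bound (hG : G.Connected) :
    ∃ C : ℝ, 0 ≤ C ∧ ∀ n, nrm n (fun l : List V => (rng (run G (fun _ => 0) l) : ℝ)) ≤ C := by
  obtain ⟨W, hW, c, -, hr⟩ := exists_regen G hG
  set L : ℝ := (W.length : ℝ) with hL
  have hWpos : 0 < W.length := List.length_pos_iff.2 hW
  have hLpos : 0 < L := by rw [hL]; exact_mod_cast hWpos
  set p : ℝ := ((Fintype.card V : ℝ)⁻¹) ^ W.length with hp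
  have hcard : (1 : ℝ) ≤ (Fintype.card V : ℝ) := by exact_mod_cast Fintype.card_pos
  have hp0 : 0 < p := by positivity
  have hp1 : p ≤ 1 := pow_le_one₀ (by positivity) (inv_le_one_of_one_le₀ hcard)
  set K : ℝ := L ^ 2 * (2 + 1 / p) / p ^ 2 with hK
  have step : ∀ g : V → ℕ, E W.length (fun l' => (rng (run G g l') : ℝ) ^ 2) ≤
      (1 - p ^ 2) * (rng g : ℝ) ^ 2 + (2 + 1 / p) * L ^ 2 := by
    intro g
    set r : ℝ := (rng g : ℝ) with hrdef
    have hr0 : 0 ≤ r := Nat.cast_nonneg _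
    have h1 := le_E W (f := fun l' => (r + L) ^ 2 - (rng (run G g l') : ℝ) ^ 2) (by
      intro l hl
      have h2 : (rng (run G g l) : ℝ) ≤ r + L := by
        have := rng_run_le G g l
        rw [hl] at this
        rw [hrdef, hL]; exact_mod_cast this
      have h3 : (0 : ℝ) ≤ (rng (run G g l) : ℝ) := Nat.cast_nonneg _
      nlinarith)
    rw [E_sub, E_const, ← hp] at h1
    have h4 : (rng (run G g W) : ℝ) ≤ L := by rw [hL]; exact_mod_cast hr g
    have h5 : (0 : ℝ) ≤ (rng (run G g W) : ℝ) := Nat.cast_nonneg _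
    have h6 : (rng (run G g W) : ℝ) ^ 2 ≤ L ^ 2 := by nlinarith
    have h7 : 2 * r * L ≤ p * r ^ 2 + L ^ 2 / p := by
      have : 0 ≤ (p * r - L) ^ 2 / p := by positivity
      have e : (p * r - L) ^ 2 / p = p * r ^ 2 + L ^ 2 / p - 2 * r * L := by
        field_simp; ring
      linarith
    have h8 : 0 ≤ L ^ 2 / p := by positivity
    have h9 : (2 + 1 / p) * L ^ 2 = 2 * L ^ 2 + L ^ 2 / p := by ring
    have h10 : p * (rng (run G g W) : ℝ) ^ 2 ≤ p * L ^ 2 := mul_le_mul_of_nonneg_left h6 hp0.le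
    have h11 : (1 - p) * (2 * r * L) ≤ (1 - p) * (p * r ^ 2 + L ^ 2 / p) :=
      mul_le_mul_of_nonneg_left h7 (by linarith)
    have h12 : 0 ≤ p * (L ^ 2 / p) := by positivity
    nlinarith [sq_nonneg L]
  have hKL : L ^ 2 ≤ K := by
    rw [hK, le_div_iff₀ (by positivity)]
    have : p ^ 2 ≤ 1 := by nlinarith
    have h2 : 0 ≤ 1 / p := by positivity
    nlinarith [sq_nonneg L, mul_nonneg (sq_nonneg L) h2]
  have hKe : (2 + 1 / p) * L ^ 2 = p ^ 2 * K := by rw [hK]; field_simp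
  have main : ∀ n, E n (fun l : List V => (rng (run G (fun _ => 0) l) : ℝ) ^ 2) ≤ K := by
    intro n
    induction n using Nat.strong_induction_on with
    | _ n ih =>
      by_cases hn : n < W.length
      · refine le_trans ?_ hKL
        rw [← E_const (V := V) n (L ^ 2)]
        refine E_mono fun l hl => ?_
        have h1 := rng_run_le G (fun _ => 0) l
        have h2 : rng (fun _ : V => 0) = 0 := by
          have : mx (fun _ : V => 0) ≤ 0 := mx_le fun _ => le_rfl
          unfold rng; omega
        have h3 : (rng (run G (fun _ => 0) l) : ℝ) ≤ L := by
          rw [hL]; exact_mod_cast (by omega : rng (run G (fun _ => 0) l) ≤ W.length)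
        exact pow_le_pow_left₀ (Nat.cast_nonneg _) h3 2
      · push Not at hn
        obtain ⟨q, rfl⟩ := Nat.exists_eq_add_of_le hn
        rw [add_comm, E_append]
        refine (E_mono (g := fun l => (1 - p ^ 2) * (rng (run G (fun _ => 0) l) : ℝ) ^ 2
          + (2 + 1 / p) * L ^ 2) fun l _ => ?_).trans ?_
        · simp only [run_append]
          exact step _
        · rw [E_add, E_mul_left, E_const]
          have h1 := ih q (by omega)
          have h2 : 0 ≤ 1 - p ^ 2 := by nlinarith
          rw [hKe]
          nlinarith [mul_le_mul_of_nonneg_left h1 h2]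
  exact ⟨Real.sqrt K, Real.sqrt_nonneg _, fun n => Real.sqrt_le_sqrt (main n)⟩

end RangeBound

section CLT

variable {V : Type} [Fintype V] [Nonempty V] (Mf : List V → ℝ)

/-- Centred functional. -/
noncomputable def Z (l : List V) : ℝ := Mf l - E l.length Mf

/-- Sums over consecutive chunks of length `m`. -/
noncomputable def S (m : ℕ) : ℕ → List V → ℝ
  | 0, _ => 0
  | k + 1, l => Z Mf (l.take m) + S m k (l.drop m)

lemma E_Z (n : ℕ) : E n (Z Mf) = 0 := by
  have : E n (Z Mf) = E n (fun l => Mf l - E n Mf) := E_congr fun l hl => by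
    unfold Z; rw [hl]
  rw [this, E_sub, E_const, sub_self]

lemma S_add (m j k : ℕ) (l : List V) :
    S Mf m (j + k) l = S Mf m j (l.take (j * m)) + S Mf m k (l.drop (j * m)) := by
  induction j generalizing l with
  | zero => simp [S]
  | succ j ih =>
    have e1 : j + 1 + k = (j + k) + 1 := by omega
    have e2 : (j + 1) * m = m + j * m := by ring
    rw [e1]
    simp only [S]
    rw [ih, e2, List.take_take, List.drop_take, List.drop_drop, add_assoc]
    congr 3
    · rw [Nat.min_eq_left (by omega)]
    · congr 2; omega

lemma S_succ_eq (m k : ℕ) (l : List V) :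
    S Mf m (k + 1) l = Z Mf (l.take m) + S Mf m k (l.drop m) := rfl

lemma E_S (m k : ℕ) : E (k * m) (S Mf m k) = 0 := by
  induction k with
  | zero => exact E_const _ _
  | succ k ih =>
    rw [show (k + 1) * m = m + k * m by ring]
    rw [E_congr (fun l _ => S_succ_eq Mf m k l), E_add, E_take, E_drop, E_Z, ih, add_zero]

lemma nrm_S_sq (m k : ℕ) : nrm (k * m) (S Mf m k) ^ 2 = k * nrm m (Z Mf) ^ 2 := by
  induction k with
  | zero =>
    rw [nrm_sq]
    simp [S, E_const]
  | succ k ih =>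
    rw [show (k + 1) * m = m + k * m by ring]
    rw [nrm_congr (fun l _ => S_succ_eq Mf m k l), nrm_indep_sq _ _ _ _ (E_Z Mf m), ih]
    push_cast; ring

lemma nrm_S (m k : ℕ) : nrm (k * m) (S Mf m k) = Real.sqrt k * nrm m (Z Mf) := by
  rw [← Real.sqrt_sq (nrm_nonneg (k * m) (S Mf m k)), nrm_S_sq, Real.sqrt_mul (by positivity),
    Real.sqrt_sq (nrm_nonneg _ _)]

lemma char_S (m k : ℕ) (s : ℝ) :
    E (k * m) (fun l => Complex.exp (Complex.I * ((s * S Mf m k l : ℝ) : ℂ))) =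
      (E m (fun l => Complex.exp (Complex.I * ((s * Z Mf l : ℝ) : ℂ)))) ^ k := by
  induction k with
  | zero => simp [S, E_const]
  | succ k ih =>
    rw [show (k + 1) * m = m + k * m by ring, pow_succ', ← ih, ← E_take_mul_drop]
    refine E_congr fun l _ => ?_
    rw [← Complex.exp_add, S_succ_eq]
    push_cast
    congr 1; ring

variable {Mf} {r : List V → ℝ} {C : ℝ}

lemma Z_add (hr : ∀ n, nrm n r ≤ C) (hM : ∀ l l', |Mf l + Mf l' - Mf (l ++ l')| ≤ r l)
    (m n : ℕ) :
    nrm (m + n) (fun l => Z Mf l - (Z Mf (l.take m) + Z Mf (l.drop m))) ≤ C := by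
  set e : List V → ℝ := fun l => Mf (l.take m) + Mf (l.drop m) - Mf l with he
  have hE : E (m + n) e = E m Mf + E n Mf - E (m + n) Mf := by
    rw [he, E_sub, E_add, E_take, E_drop]
  have h1 : nrm (m + n) (fun l => Z Mf l - (Z Mf (l.take m) + Z Mf (l.drop m))) =
      nrm (m + n) (fun l => -(e l - E (m + n) e)) := by
    refine nrm_congr fun l hl => ?_
    have l1 : (l.take m).length = m := by simp [hl]
    have l2 : (l.drop m).length = n := by simp [hl]
    unfold Z
    rw [hE, l1, l2, hl, he]; ring
  rw [h1, nrm_neg]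
  refine (nrm_center_le _ _).trans ((nrm_mono (g := fun l => r (l.take m)) fun l _ => ?_).trans ?_)
  · have := hM (l.take m) (l.drop m)
    rw [List.take_append_drop] at this
    exact this.trans (le_abs_self _)
  · rw [nrm_take]; exact hr m

lemma aux_ineq {C a b : ℝ} (hC : 0 ≤ C) (ha : 0 ≤ a) (hb : 0 ≤ b) {j k : ℕ} (hj : 1 ≤ j)
    (hjk : j ≤ k) (hkj : k ≤ j + 1)
    (h1 : a ≤ C * (5 * Real.sqrt j - 4)) (h2 : b ≤ C * (5 * Real.sqrt k - 4)) :
    Real.sqrt (a ^ 2 + b ^ 2) + C ≤ C * (5 * Real.sqrt ((j + k : ℕ)) - 4) := by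
  set x := Real.sqrt j with hx
  set y := Real.sqrt k with hy
  set s := Real.sqrt ((j + k : ℕ)) with hs
  have x0 : 0 ≤ x := Real.sqrt_nonneg _
  have y0 : 0 ≤ y := Real.sqrt_nonneg _
  have s0 : 0 ≤ s := Real.sqrt_nonneg _
  have x2 : x ^ 2 = j := Real.sq_sqrt (Nat.cast_nonneg _)
  have y2 : y ^ 2 = k := Real.sq_sqrt (Nat.cast_nonneg _)
  have s2 : s ^ 2 = j + k := by rw [hs, Real.sq_sqrt (Nat.cast_nonneg _)]; push_cast; ring
  have j1 : (1 : ℝ) ≤ j := by exact_mod_cast hj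
  have k1 : (1 : ℝ) ≤ k := by exact_mod_cast hj.trans hjk
  have s14 : 1.41 ≤ s := by
    refine Real.le_sqrt_of_sq_le ?_
    push_cast; nlinarith
  -- 4 j k ≥ 0.87 (j+k)^2
  have hjk4 : 0.87 * ((j : ℝ) + k) ^ 2 ≤ 4 * (j * k) := by
    rcases Nat.lt_or_ge j k with h | h
    · have : k = j + 1 := by omega
      subst this
      push_cast
      nlinarith
    · have : k = j := by omega
      subst this
      nlinarith
  have hxy : 0.932 * s ^ 2 ≤ 2 * (x * y) := by
    refine abs_le_of_sq_le_sq' ?_ (by positivity) |>.2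
    have e : (2 * (x * y)) ^ 2 = 4 * (j * k) := by rw [← x2, ← y2]; ring
    rw [e, s2]
    nlinarith [sq_nonneg ((j : ℝ) + k)]
  have hsum : 1.389 * s ≤ x + y := by
    refine abs_le_of_sq_le_sq' ?_ (by positivity) |>.2
    nlinarith
  have hx1 : 1 ≤ x := by rw [hx]; exact Real.one_le_sqrt.2 j1
  have hy1 : 1 ≤ y := by rw [hy]; exact Real.one_le_sqrt.2 k1
  have hs : Real.sqrt (a ^ 2 + b ^ 2) ≤ C * (5 * s - 5) := by
    refine Real.sqrt_le_iff.2 ⟨mul_nonneg hC (by linarith), ?_⟩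
    have a2 : a ^ 2 ≤ (C * (5 * x - 4)) ^ 2 := pow_le_pow_left₀ ha h1 2
    have b2 : b ^ 2 ≤ (C * (5 * y - 4)) ^ 2 := pow_le_pow_left₀ hb h2 2
    have key : (5 * x - 4) ^ 2 + (5 * y - 4) ^ 2 ≤ (5 * s - 5) ^ 2 := by nlinarith
    calc a ^ 2 + b ^ 2 ≤ C ^ 2 * ((5 * x - 4) ^ 2 + (5 * y - 4) ^ 2) := by nlinarith
      _ ≤ C ^ 2 * (5 * s - 5) ^ 2 := mul_le_mul_of_nonneg_left key (sq_nonneg C)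
      _ = _ := by ring
  linarith

lemma nrm_Z_sub_S (hC : 0 ≤ C) (hr : ∀ n, nrm n r ≤ C) (hM : ∀ l l', |Mf l + Mf l' - Mf (l ++ l')| ≤ r l)
    (m k : ℕ) :
    nrm (k * m) (fun l => Z Mf l - S Mf m k l) ≤ 5 * C * Real.sqrt k := by
  have main : ∀ k, 1 ≤ k → nrm (k * m) (fun l => Z Mf l - S Mf m k l) ≤
      C * (5 * Real.sqrt k - 4) := by
    intro k
    induction k using Nat.strong_induction_on with
    | _ k ih =>
      intro hk
      rcases Nat.eq_or_lt_of_le hk with rfl | hk2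
      · have : nrm (1 * m) (fun l => Z Mf l - S Mf m 1 l) = nrm (1 * m) (fun _ : List V => 0) := by
          refine nrm_congr fun l hl => ?_
          have : l.length ≤ m := by omega
          simp [S, List.take_of_length_le this]
        rw [this]
        unfold nrm
        rw [E_const]
        simp; linarith
      · obtain ⟨i, j, hi, hij, hji, rfl⟩ : ∃ i j, 1 ≤ i ∧ i ≤ j ∧ j ≤ i + 1 ∧ k = i + j :=
          ⟨k / 2, k - k / 2, by omega, by omega, by omega, by omega⟩
        have h1 := ih i (by omega) hi
        have h2 := ih j (by omega) (by omega)
        refine le_trans ?_ (aux_ineq hC (nrm_nonneg _ _) (nrm_nonneg _ _) hi hij hji h1 h2)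
        set D : ℕ → List V → ℝ := fun k l => Z Mf l - S Mf m k l with hD
        have e : nrm ((i + j) * m) (fun l => Z Mf l - S Mf m (i + j) l) =
            nrm (i * m + j * m) (fun l => (D i (l.take (i * m)) + D j (l.drop (i * m))) +
              (Z Mf l - (Z Mf (l.take (i * m)) + Z Mf (l.drop (i * m))))) := by
          rw [add_mul]
          refine nrm_congr fun l _ => ?_
          rw [S_add, hD]; ring
        rw [e]
        refine (nrm_add_le _ _ _).trans (add_le_add ?_ (Z_add hr hM _ _))
        refine Real.le_sqrt_of_sq_le ?_
        rw [nrm_indep_sq]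
        rw [hD, E_sub, E_Z, E_S, sub_zero]
  rcases Nat.eq_zero_or_pos k with rfl | hk
  · have : nrm (0 * m) (fun l => Z Mf l - S Mf m 0 l) = nrm (0 * m) (fun _ : List V => 0) := by
      refine nrm_congr fun l hl => ?_
      have : l = [] := List.length_eq_zero_iff.1 (by omega)
      subst this
      simp [S, Z, E]
    rw [this]
    unfold nrm
    rw [E_const]
    simp
  · have := main k hk
    linarith

lemma nrm_Z_scale (hC : 0 ≤ C) (hr : ∀ n, nrm n r ≤ C) (hM : ∀ l l', |Mf l + Mf l' - Mf (l ++ l')| ≤ r l)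
    (m k : ℕ) :
    |nrm (k * m) (Z Mf) - Real.sqrt k * nrm m (Z Mf)| ≤ 5 * C * Real.sqrt k := by
  rw [← nrm_S]
  exact (abs_nrm_sub_le _ _ _).trans (nrm_Z_sub_S hC hr hM m k)

lemma exists_sigma (hC : 0 ≤ C) (hr : ∀ n, nrm n r ≤ C) (hM : ∀ l l', |Mf l + Mf l' - Mf (l ++ l')| ≤ r l)
    : ∃ σ : ℝ, 0 ≤ σ ∧
    Tendsto (fun m : ℕ => nrm m (Z Mf) / Real.sqrt m) atTop (𝓝 σ) ∧
    ∀ m : ℕ, 1 ≤ m → |nrm m (Z Mf) / Real.sqrt m - σ| ≤ 5 * C / Real.sqrt m := by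
  set u : ℕ → ℝ := fun m => nrm m (Z Mf) / Real.sqrt m with hu
  have h1 : ∀ m k : ℕ, 1 ≤ m → 1 ≤ k → |u (k * m) - u m| ≤ 5 * C / Real.sqrt m := by
    intro m k hm hk
    have hm0 : 0 < Real.sqrt m := Real.sqrt_pos.2 (by exact_mod_cast hm)
    have hk0 : 0 < Real.sqrt k := Real.sqrt_pos.2 (by exact_mod_cast hk)
    have e : u (k * m) - u m = (nrm (k * m) (Z Mf) - Real.sqrt k * nrm m (Z Mf)) /
        (Real.sqrt k * Real.sqrt m) := by
      rw [hu]
      simp only [Nat.cast_mul]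
      rw [Real.sqrt_mul (Nat.cast_nonneg _)]
      field_simp
    rw [e, abs_div, abs_of_pos (mul_pos hk0 hm0), div_le_div_iff₀ (mul_pos hk0 hm0) hm0]
    have := nrm_Z_scale hC hr hM m k
    nlinarith
  have h2 : ∀ m k : ℕ, 1 ≤ m → 1 ≤ k → |u m - u k| ≤ 5 * C / Real.sqrt m + 5 * C / Real.sqrt k := by
    intro m k hm hk
    have a1 := h1 m k hm hk
    have a2 := h1 k m hk hm
    rw [mul_comm m k] at a2
    rw [abs_le] at *
    constructor <;> linarith [a1.1, a1.2, a2.1, a2.2]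
  have hlim : Tendsto (fun m : ℕ => 5 * C / Real.sqrt m) atTop (𝓝 0) :=
    (Real.tendsto_sqrt_atTop.comp tendsto_natCast_atTop_atTop).const_div_atTop _
  have hc : CauchySeq u := by
    rw [Metric.cauchySeq_iff]
    intro ε hε
    have := (hlim.eventually (gt_mem_nhds (half_pos hε))).and (eventually_ge_atTop 1)
    obtain ⟨N, hN⟩ := eventually_atTop.1 this
    refine ⟨N, fun m hm k hk => ?_⟩
    rw [Real.dist_eq]
    have := h2 m k (hN m hm).2 (hN k hk).2
    have := (hN m hm).1
    have := (hN k hk).1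
    linarith
  obtain ⟨σ, hσ⟩ := cauchySeq_tendsto_of_complete hc
  refine ⟨σ, ge_of_tendsto' hσ fun m => div_nonneg (nrm_nonneg _ _) (Real.sqrt_nonneg _), hσ, ?_⟩
  intro m hm
  have t1 : Tendsto (fun k => |u m - u k|) atTop (𝓝 |u m - σ|) := (tendsto_const_nhds.sub hσ).abs
  have t2 : Tendsto (fun k : ℕ => 5 * C / Real.sqrt m + 5 * C / Real.sqrt k) atTop
      (𝓝 (5 * C / Real.sqrt m + 0)) := tendsto_const_nhds.add hlim
  have := le_of_tendsto_of_tendsto t1 t2 (by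
    filter_upwards [eventually_ge_atTop 1] with k hk using h2 m k hm hk)
  simpa using this

end CLT
section CharLimit

variable {V : Type} [Fintype V] [Nonempty V]

lemma norm_cexp_sub_le (x y : ℝ) :
    ‖Complex.exp (Complex.I * (x : ℂ)) - Complex.exp (Complex.I * (y : ℂ))‖ ≤ |x - y| := by
  have e : Complex.exp (Complex.I * (x : ℂ)) - Complex.exp (Complex.I * (y : ℂ)) =
      Complex.exp (Complex.I * (y : ℂ)) * (Complex.exp (Complex.I * ((x - y : ℝ) : ℂ)) - 1) := by
    rw [mul_sub, ← Complex.exp_add, mul_one]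
    congr 2; push_cast; ring
  rw [e, norm_mul]
  have h1 : ‖Complex.exp (Complex.I * (y : ℂ))‖ = 1 := by
    rw [mul_comm]; exact Complex.norm_exp_ofReal_mul_I y
  rw [h1, one_mul]
  exact Real.norm_exp_I_mul_ofReal_sub_one_le

lemma norm_E_cexp_sub_le (n : ℕ) (f g : List V → ℝ) :
    ‖E n (fun l => Complex.exp (Complex.I * ((f l : ℝ) : ℂ))) -
      E n (fun l => Complex.exp (Complex.I * ((g l : ℝ) : ℂ)))‖ ≤ E n (fun l => |f l - g l|) := by
  rw [← E_sub]
  exact (norm_E_le _ _).trans (E_mono fun l _ => norm_cexp_sub_le _ _)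

lemma norm_E_cexp_le (n : ℕ) (f : List V → ℝ) :
    ‖E n (fun l => Complex.exp (Complex.I * ((f l : ℝ) : ℂ)))‖ ≤ 1 := by
  refine (norm_E_le _ _).trans ?_
  rw [E_congr (g := fun _ => (1 : ℝ)), E_const]
  intro l _
  rw [mul_comm]; exact Complex.norm_exp_ofReal_mul_I _

lemma norm_pow_sub_pow_le {a b : ℂ} (ha : ‖a‖ ≤ 1) (hb : ‖b‖ ≤ 1) (k : ℕ) :
    ‖a ^ k - b ^ k‖ ≤ k * ‖a - b‖ := by
  induction k with
  | zero => simp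
  | succ k ih =>
    have e : a ^ (k + 1) - b ^ (k + 1) = a * (a ^ k - b ^ k) + (a - b) * b ^ k := by ring
    rw [e]
    refine (norm_add_le _ _).trans ?_
    rw [norm_mul, norm_mul, norm_pow]
    have h1 : ‖b‖ ^ k ≤ 1 := pow_le_one₀ (norm_nonneg _) hb
    have h2 : ‖a‖ * ‖a ^ k - b ^ k‖ ≤ 1 * ‖a ^ k - b ^ k‖ :=
      mul_le_mul_of_nonneg_right ha (norm_nonneg _)
    have h3 : ‖a - b‖ * ‖b‖ ^ k ≤ ‖a - b‖ * 1 := mul_le_mul_of_nonneg_left h1 (norm_nonneg _)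
    push_cast
    linarith

lemma exists_bound (m : ℕ) (f : List V → ℝ) : ∃ B : ℝ, 0 ≤ B ∧ ∀ l, l.length = m → |f l| ≤ B := by
  have hfin : {l : List V | l.length = m}.Finite := List.finite_length_eq V m
  obtain ⟨B, hB⟩ := (hfin.image fun l => |f l|).bddAbove
  exact ⟨max B 0, le_max_right _ _, fun l hl => (hB ⟨l, hl, rfl⟩).trans (le_max_left _ _)⟩

/-- Second order expansion of the characteristic function. -/
lemma taylor_E (m : ℕ) (f : List V → ℝ) (hf : E m f = 0) (B : ℝ) (hB0 : 0 ≤ B)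
    (hB : ∀ l, l.length = m → |f l| ≤ B) (s : ℝ) :
    ‖E m (fun l => Complex.exp (Complex.I * ((s * f l : ℝ) : ℂ))) -
      (1 - ((s ^ 2 * nrm m f ^ 2 / 2 : ℝ) : ℂ))‖ ≤ (|s| * B) ^ 3 * Real.exp (|s| * B) := by
  have e : (1 - ((s ^ 2 * nrm m f ^ 2 / 2 : ℝ) : ℂ)) =
      E m (fun l => (1 + (Complex.I * s) * (f l : ℂ)) - ((s ^ 2 / 2 : ℝ) : ℂ) * ((f l ^ 2 : ℝ) : ℂ)) := by
    rw [E_sub, E_add, E_const, E_mul_left_C, E_mul_left_C, E_ofReal, E_ofReal, hf, nrm_sq]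
    push_cast; ring
  rw [e, ← E_sub]
  refine (norm_E_le _ _).trans ?_
  rw [← E_const (V := V) m ((|s| * B) ^ 3 * Real.exp (|s| * B))]
  refine E_mono fun l hl => ?_
  have h := Complex.norm_exp_sub_sum_le_norm_mul_exp (Complex.I * ((s * f l : ℝ) : ℂ)) 3
  have hn : ‖Complex.I * ((s * f l : ℝ) : ℂ)‖ ≤ |s| * B := by
    rw [norm_mul, Complex.norm_I, one_mul, Complex.norm_real, Real.norm_eq_abs, abs_mul]
    exact mul_le_mul_of_nonneg_left (hB l hl) (abs_nonneg _)
  have h2 : ‖Complex.I * ((s * f l : ℝ) : ℂ)‖ ^ 3 * Real.exp ‖Complex.I * ((s * f l : ℝ) : ℂ)‖ ≤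
      (|s| * B) ^ 3 * Real.exp (|s| * B) := by
    gcongr
  refine le_trans (le_of_eq ?_) (h.trans h2)
  congr 1
  rw [Finset.sum_range_succ, Finset.sum_range_succ, Finset.sum_range_succ, Finset.sum_range_zero]
  have hI : (Complex.I * ((s * f l : ℝ) : ℂ)) ^ 2 = - ((s ^ 2 * f l ^ 2 : ℝ) : ℂ) := by
    rw [mul_pow, Complex.I_sq]; push_cast; ring
  rw [hI]
  simp only [pow_zero, pow_one, Nat.factorial]
  push_cast
  ring

lemma tendsto_div_nat (m : ℕ) (hm : 1 ≤ m) :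
    Tendsto (fun n : ℕ => ((n / m : ℕ) : ℝ) / n) atTop (𝓝 (1 / m)) := by
  have hm0 : (0 : ℝ) < m := by exact_mod_cast hm
  have h := tendsto_nat_floor_mul_div_atTop (R := ℝ) (a := 1 / m) (by positivity)
  have h2 := h.comp tendsto_natCast_atTop_atTop (α := ℕ)
  refine h2.congr fun n => ?_
  simp only [Function.comp]
  congr 2
  rw [one_div_mul_eq_div, Nat.floor_div_eq_div]

lemma tendsto_char_pow (m : ℕ) (hm : 1 ≤ m) (f : List V → ℝ) (hf : E m f = 0) (t : ℝ) :
    Tendsto (fun n : ℕ =>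
      (E m (fun l => Complex.exp (Complex.I * ((t / Real.sqrt n * f l : ℝ) : ℂ)))) ^ (n / m)) atTop
      (𝓝 (Complex.exp ((-(t ^ 2 * (nrm m f / Real.sqrt m) ^ 2 / 2) : ℝ) : ℂ))) := by
  obtain ⟨B, hB0, hB⟩ := exists_bound m f
  set v := nrm m f ^ 2 with hv
  have hv0 : 0 ≤ v := sq_nonneg _
  set y : ℕ → ℝ := fun n => t ^ 2 * v / 2 / n with hy
  have hyt : Tendsto y atTop (𝓝 0) := tendsto_natCast_atTop_atTop.const_div_atTop _
  have hm0 : (0 : ℝ) < m := by exact_mod_cast hm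
  have hb : Tendsto (fun n : ℕ => (Complex.exp ((-(y n) : ℝ) : ℂ)) ^ (n / m)) atTop
      (𝓝 (Complex.exp ((-(t ^ 2 * (nrm m f / Real.sqrt m) ^ 2 / 2) : ℝ) : ℂ))) := by
    have e : ∀ n : ℕ, (Complex.exp ((-(y n) : ℝ) : ℂ)) ^ (n / m) =
        Complex.exp ((-(((n / m : ℕ) : ℝ) / n * (t ^ 2 * v / 2)) : ℝ) : ℂ) := by
      intro n
      rw [← Complex.exp_nat_mul]
      congr 1
      rw [hy]
      push_cast
      ring
    simp only [e]
    have h1 := ((tendsto_div_nat m hm).mul_const (t ^ 2 * v / 2)).neg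
    have h2 : -(1 / (m : ℝ) * (t ^ 2 * v / 2)) = -(t ^ 2 * (nrm m f / Real.sqrt m) ^ 2 / 2) := by
      rw [div_pow, Real.sq_sqrt hm0.le, hv]; field_simp
    rw [h2] at h1
    exact (Complex.continuous_exp.tendsto _).comp
      ((Complex.continuous_ofReal.tendsto _).comp h1)
  -- difference goes to zero
  have hsq : Tendsto (fun n : ℕ => |t| / Real.sqrt n * B) atTop (𝓝 0) := by
    have := ((Real.tendsto_sqrt_atTop.comp tendsto_natCast_atTop_atTop (α := ℕ)).const_div_atTop |t|).mul_const B
    simpa using this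
  have hbound : Tendsto (fun n : ℕ => (|t| * B) ^ 2 * (|t| / Real.sqrt n * B) *
      Real.exp (|t| / Real.sqrt n * B) + (t ^ 2 * v / 2) * y n) atTop (𝓝 0) := by
    have h1 := ((hsq.const_mul ((|t| * B) ^ 2)).mul ((Real.continuous_exp.tendsto _).comp hsq)).add
      (hyt.const_mul (t ^ 2 * v / 2))
    simpa using h1
  have hdiff : Tendsto (fun n : ℕ =>
      (E m (fun l => Complex.exp (Complex.I * ((t / Real.sqrt n * f l : ℝ) : ℂ)))) ^ (n / m) -
      (Complex.exp ((-(y n) : ℝ) : ℂ)) ^ (n / m)) atTop (𝓝 0) := by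
    refine squeeze_zero_norm' ?_ hbound
    filter_upwards [eventually_ge_atTop 1, hyt.eventually (gt_mem_nhds one_pos)] with n hn hy1
    have hn0 : (0 : ℝ) < n := by exact_mod_cast hn
    have hsn : 0 < Real.sqrt n := Real.sqrt_pos.2 hn0
    have hyn : 0 ≤ y n := by rw [hy]; positivity
    set a := E m (fun l => Complex.exp (Complex.I * ((t / Real.sqrt n * f l : ℝ) : ℂ))) with ha
    set b := Complex.exp ((-(y n) : ℝ) : ℂ) with hbdef
    have ha1 : ‖a‖ ≤ 1 := norm_E_cexp_le _ _
    have hb1 : ‖b‖ ≤ 1 := by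
      rw [hbdef, Complex.norm_exp_ofReal]; exact Real.exp_le_one_iff.2 (by linarith)
    have h1 := taylor_E m f hf B hB0 hB (t / Real.sqrt n)
    have e1 : (t / Real.sqrt n) ^ 2 * nrm m f ^ 2 / 2 = y n := by
      rw [div_pow, Real.sq_sqrt hn0.le, hy, hv]; ring
    rw [e1, ← ha, abs_div, abs_of_pos hsn] at h1
    have h2 : ‖b - (1 - ((y n : ℝ) : ℂ))‖ ≤ (y n) ^ 2 := by
      have := Complex.norm_exp_sub_one_sub_id_le (x := ((-(y n) : ℝ) : ℂ)) (by
        rw [Complex.norm_real, Real.norm_eq_abs, abs_neg, abs_of_nonneg hyn]; exact hy1.le)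
      rw [Complex.norm_real, Real.norm_eq_abs, abs_neg, abs_of_nonneg hyn] at this
      refine le_trans (le_of_eq ?_) this
      congr 1
      rw [hbdef]; push_cast; ring
    have h3 : ‖a - b‖ ≤ (|t| / Real.sqrt n * B) ^ 3 * Real.exp (|t| / Real.sqrt n * B) + (y n) ^ 2 := by
      have e : a - b = (a - (1 - ((y n : ℝ) : ℂ))) - (b - (1 - ((y n : ℝ) : ℂ))) := by ring
      rw [e]
      exact (norm_sub_le _ _).trans (add_le_add h1 h2)
    have hk : ((n / m : ℕ) : ℝ) ≤ n := by exact_mod_cast Nat.div_le_self n m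
    calc ‖a ^ (n / m) - b ^ (n / m)‖ ≤ ((n / m : ℕ) : ℝ) * ‖a - b‖ := norm_pow_sub_pow_le ha1 hb1 _
      _ ≤ n * ((|t| / Real.sqrt n * B) ^ 3 * Real.exp (|t| / Real.sqrt n * B) + (y n) ^ 2) := by
        gcongr
      _ = _ := by
        have e2 : (n : ℝ) * (|t| / Real.sqrt n * B) ^ 3 = (|t| * B) ^ 2 * (|t| / Real.sqrt n * B) := by
          have : (n : ℝ) = Real.sqrt n ^ 2 := (Real.sq_sqrt hn0.le).symm
          rw [this]
          have e3 : Real.sqrt (Real.sqrt n ^ 2) = Real.sqrt n := Real.sqrt_sq hsn.le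
          rw [e3]
          field_simp
        have e4 : (n : ℝ) * y n = t ^ 2 * v / 2 := by rw [hy]; field_simp
        rw [mul_add, ← mul_assoc, e2, sq (y n), ← mul_assoc (n : ℝ) (y n), e4]
  have := hdiff.add hb
  simpa using this

variable {Mf : List V → ℝ} {r : List V → ℝ} {C : ℝ}

lemma char_approx (hC : 0 ≤ C) (hr : ∀ n, nrm n r ≤ C) (hM : ∀ l l', |Mf l + Mf l' - Mf (l ++ l')| ≤ r l)
    (m : ℕ) (hm : 1 ≤ m) (t : ℝ) (n : ℕ) (hn : 1 ≤ n) :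
    ‖E n (fun l => Complex.exp (Complex.I * ((t / Real.sqrt n * Z Mf l : ℝ) : ℂ))) -
      (E m (fun l => Complex.exp (Complex.I * ((t / Real.sqrt n * Z Mf l : ℝ) : ℂ)))) ^ (n / m)‖ ≤
    |t| * (C + ∑ i ∈ Finset.range m, nrm i (Z Mf)) / Real.sqrt n + |t| * (5 * C / Real.sqrt m) := by
  set k := n / m with hk
  set q := n % m with hq
  have hnkq : n = k * m + q := by rw [hk, hq, mul_comm]; exact (Nat.div_add_mod n m).symm
  have hn0 : (0 : ℝ) < n := by exact_mod_cast hn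
  have hsn : 0 < Real.sqrt n := Real.sqrt_pos.2 hn0
  have hm0 : (0 : ℝ) < m := by exact_mod_cast hm
  have hsm : 0 < Real.sqrt m := Real.sqrt_pos.2 hm0
  set s := t / Real.sqrt n with hs
  rw [← char_S Mf m k s]
  have e1 : E (k * m) (fun l => Complex.exp (Complex.I * ((s * S Mf m k l : ℝ) : ℂ))) =
      E n (fun l => Complex.exp (Complex.I * ((s * S Mf m k (l.take (k * m)) : ℝ) : ℂ))) := by
    rw [hnkq, E_take (k * m) q (fun l => Complex.exp (Complex.I * ((s * S Mf m k l : ℝ) : ℂ)))]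
  rw [e1]
  refine (norm_E_cexp_sub_le _ _ _).trans ?_
  have e2 : E n (fun l => |s * Z Mf l - s * S Mf m k (l.take (k * m))|) =
      |s| * E n (fun l => |Z Mf l - S Mf m k (l.take (k * m))|) := by
    rw [← E_mul_left]
    exact E_congr fun l _ => by rw [← mul_sub, abs_mul]
  rw [e2]
  have h1 : nrm n (fun l => Z Mf l - S Mf m k (l.take (k * m))) ≤
      C + (5 * C * Real.sqrt k + nrm q (Z Mf)) := by
    have e3 : nrm n (fun l => Z Mf l - S Mf m k (l.take (k * m))) =
      nrm (k * m + q) (fun l => (Z Mf l - (Z Mf (l.take (k * m)) + Z Mf (l.drop (k * m)))) +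
        ((fun l' => Z Mf l' - S Mf m k l') (l.take (k * m)) + Z Mf (l.drop (k * m)))) := by
      rw [hnkq]
      exact nrm_congr fun l _ => by ring
    rw [e3]
    refine (nrm_add_le _ _ _).trans (add_le_add (Z_add hr hM _ _) ?_)
    refine (nrm_add_le _ _ _).trans ?_
    rw [nrm_take (k * m) q (fun l' => Z Mf l' - S Mf m k l'), nrm_drop]
    exact add_le_add_left (nrm_Z_sub_S hC hr hM m k) _
  have h2 : nrm q (Z Mf) ≤ ∑ i ∈ Finset.range m, nrm i (Z Mf) :=
    Finset.single_le_sum (f := fun i => nrm i (Z Mf)) (fun i _ => nrm_nonneg _ _)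
      (Finset.mem_range.2 (Nat.mod_lt _ hm))
  have h3 : Real.sqrt k * Real.sqrt m ≤ Real.sqrt n := by
    rw [← Real.sqrt_mul (Nat.cast_nonneg _)]
    refine Real.sqrt_le_sqrt ?_
    exact_mod_cast (by omega : k * m ≤ n)
  have h4 := E_abs_le n (fun l => Z Mf l - S Mf m k (l.take (k * m)))
  have hsabs : |s| = |t| / Real.sqrt n := by rw [hs, abs_div, abs_of_pos hsn]
  have h5 : Real.sqrt k / Real.sqrt n ≤ 1 / Real.sqrt m := by
    rw [div_le_div_iff₀ hsn hsm]; linarith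
  calc |s| * E n (fun l => |Z Mf l - S Mf m k (l.take (k * m))|)
      ≤ |s| * (C + (5 * C * Real.sqrt k + ∑ i ∈ Finset.range m, nrm i (Z Mf))) :=
        mul_le_mul_of_nonneg_left (by linarith) (abs_nonneg _)
    _ = |t| * (C + ∑ i ∈ Finset.range m, nrm i (Z Mf)) / Real.sqrt n +
        |t| * (5 * C) * (Real.sqrt k / Real.sqrt n) := by rw [hsabs]; ring
    _ ≤ |t| * (C + ∑ i ∈ Finset.range m, nrm i (Z Mf)) / Real.sqrt n +
        |t| * (5 * C) * (1 / Real.sqrt m) := by gcongr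
    _ = _ := by ring

lemma char_limit (hC : 0 ≤ C) (hr : ∀ n, nrm n r ≤ C) (hM : ∀ l l', |Mf l + Mf l' - Mf (l ++ l')| ≤ r l)
    (σ : ℝ)
    (hσ : Tendsto (fun m : ℕ => nrm m (Z Mf) / Real.sqrt m) atTop (𝓝 σ)) (t : ℝ) :
    Tendsto (fun n : ℕ =>
      E n (fun l => Complex.exp (Complex.I * ((t / Real.sqrt n * Z Mf l : ℝ) : ℂ)))) atTop
      (𝓝 (Complex.exp ((-(t ^ 2 * σ ^ 2 / 2) : ℝ) : ℂ))) := by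
  rw [Metric.tendsto_atTop']
  intro ε hε
  have hsqrt : Tendsto (fun n : ℕ => Real.sqrt n) atTop atTop :=
    Real.tendsto_sqrt_atTop.comp tendsto_natCast_atTop_atTop
  have l1 : Tendsto (fun m : ℕ => |t| * (5 * C / Real.sqrt m)) atTop (𝓝 0) := by
    simpa using (hsqrt.const_div_atTop (5 * C)).const_mul |t|
  have l2 : Tendsto (fun m : ℕ =>
      Complex.exp ((-(t ^ 2 * (nrm m (Z Mf) / Real.sqrt m) ^ 2 / 2) : ℝ) : ℂ)) atTop
      (𝓝 (Complex.exp ((-(t ^ 2 * σ ^ 2 / 2) : ℝ) : ℂ))) := by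
    refine (Complex.continuous_exp.tendsto _).comp ((Complex.continuous_ofReal.tendsto _).comp ?_)
    exact (((hσ.pow 2).const_mul (t ^ 2)).div_const 2).neg
  obtain ⟨m, ⟨hm1, hm2⟩, hm⟩ := ((l1.eventually (gt_mem_nhds (by positivity : 0 < ε / 4))).and
    (Metric.tendsto_nhds.1 l2 (ε / 4) (by positivity)) |>.and (eventually_ge_atTop 1)).exists
  have l3 : Tendsto (fun n : ℕ => |t| * (C + ∑ i ∈ Finset.range m, nrm i (Z Mf)) / Real.sqrt n)
    atTop (𝓝 0) := hsqrt.const_div_atTop _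
  have l4 := tendsto_char_pow m hm (Z Mf) (E_Z Mf m) t
  have ev := ((l3.eventually (gt_mem_nhds (by positivity : 0 < ε / 4))).and
    (Metric.tendsto_nhds.1 l4 (ε / 4) (by positivity)) |>.and (eventually_ge_atTop 1))
  obtain ⟨N, hN⟩ := eventually_atTop.1 ev
  refine ⟨N, fun n hn => ?_⟩
  obtain ⟨⟨h1, h2⟩, h3⟩ := hN n hn.le
  have h4 := char_approx hC hr hM m hm t n h3
  rw [← dist_eq_norm] at h4
  have d1 := dist_triangle (E n (fun l => Complex.exp (Complex.I * ((t / Real.sqrt n * Z Mf l : ℝ) : ℂ))))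
    ((E m (fun l => Complex.exp (Complex.I * ((t / Real.sqrt n * Z Mf l : ℝ) : ℂ)))) ^ (n / m))
    (Complex.exp ((-(t ^ 2 * σ ^ 2 / 2) : ℝ) : ℂ))
  have d2 := dist_triangle
    ((E m (fun l => Complex.exp (Complex.I * ((t / Real.sqrt n * Z Mf l : ℝ) : ℂ)))) ^ (n / m))
    (Complex.exp ((-(t ^ 2 * (nrm m (Z Mf) / Real.sqrt m) ^ 2 / 2) : ℝ) : ℂ))
    (Complex.exp ((-(t ^ 2 * σ ^ 2 / 2) : ℝ) : ℂ))
  linarith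

lemma mean_add (hr : ∀ n, nrm n r ≤ C) (hM : ∀ l l', |Mf l + Mf l' - Mf (l ++ l')| ≤ r l)
    (m n : ℕ) : |E m Mf + E n Mf - E (m + n) Mf| ≤ C := by
  have h : E (m + n) (fun l => Mf (l.take m) + Mf (l.drop m) - Mf l) =
      E m Mf + E n Mf - E (m + n) Mf := by rw [E_sub, E_add, E_take, E_drop]
  rw [← h]
  refine (abs_E_le _ _).trans ((nrm_mono (g := fun l => r (l.take m)) fun l _ => ?_).trans ?_)
  · have := hM (l.take m) (l.drop m)
    rw [List.take_append_drop] at this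
    exact this.trans (le_abs_self _)
  · rw [nrm_take]; exact hr m

lemma mean_approx (hr : ∀ n, nrm n r ≤ C) (hM : ∀ l l', |Mf l + Mf l' - Mf (l ++ l')| ≤ r l)
    (α : ℝ) (hα : Tendsto (fun n : ℕ => E n Mf / n) atTop (𝓝 α)) (m : ℕ) :
    |E m Mf - m * α| ≤ C := by
  have h1 : ∀ k : ℕ, |E (k * m) Mf - k * E m Mf| ≤ k * C + |Mf []| := by
    intro k
    induction k with
    | zero => simp [E]
    | succ k ih =>
      have := mean_add hr hM (k * m) m
      rw [show (k + 1) * m = k * m + m by ring]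
      push_cast
      rw [abs_le] at *
      constructor <;> linarith [this.1, this.2, ih.1, ih.2]
  rcases Nat.eq_zero_or_pos m with rfl | hm
  · have := mean_add hr hM 0 0
    simpa using this
  have hm0 : (0 : ℝ) < m := by exact_mod_cast hm
  have t1 : Tendsto (fun k : ℕ => |E (k * m) Mf / ((k * m : ℕ) : ℝ) * m - E m Mf|) atTop
      (𝓝 |α * m - E m Mf|) := by
    have h2 : Tendsto (fun k : ℕ => k * m) atTop atTop :=
      tendsto_id.atTop_mul_const' hm
    exact (((hα.comp h2).mul_const (m : ℝ)).sub_const _).abs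
  have t2 : Tendsto (fun k : ℕ => C + |Mf []| / (k : ℝ)) atTop (𝓝 (C + 0)) :=
    tendsto_const_nhds.add (tendsto_natCast_atTop_atTop.const_div_atTop _)
  have h3 := le_of_tendsto_of_tendsto t1 t2 (by
    filter_upwards [eventually_ge_atTop 1] with k hk
    have hk0 : (0 : ℝ) < k := by exact_mod_cast hk
    have e : E (k * m) Mf / ((k * m : ℕ) : ℝ) * m - E m Mf = (E (k * m) Mf - k * E m Mf) / k := by
      push_cast; field_simp
    rw [e, abs_div, abs_of_pos hk0, div_le_iff₀ hk0, add_mul, div_mul_cancel₀ _ hk0.ne']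
    linarith [h1 k])
  rw [add_zero, abs_sub_comm] at h3
  rwa [mul_comm] 

end CharLimit
section Variance

variable {V : Type} [Fintype V] [Nonempty V] (G : SimpleGraph V)

lemma mx_add (h : V → ℕ) (δ : ℕ) : mx (fun x => h x + δ) = mx h + δ := by
  obtain ⟨x, hx⟩ := exists_mx h
  refine le_antisymm (mx_le fun y => ?_) ?_
  · have := le_mx h y
    omega
  · rw [← hx]; exact le_mx (fun x => h x + δ) x

lemma var_decomp (q n : ℕ) (f : List V → ℝ) (μ : ℝ) :
    E (q + n) (fun l => (f l - μ) ^ 2) =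
      E q (fun l => E n (fun l' => (f (l ++ l') - E n (fun l'' => f (l ++ l''))) ^ 2)) +
      E q (fun l => (E n (fun l'' => f (l ++ l'')) - μ) ^ 2) := by
  rw [E_append, ← E_add]
  refine E_congr fun l _ => ?_
  set g := E n (fun l'' => f (l ++ l'')) with hg
  have e : E n (fun l' => (f (l ++ l') - μ) ^ 2) =
      E n (fun l' => ((f (l ++ l') - g) ^ 2 + (2 * (g - μ)) * (f (l ++ l') - g)) + (g - μ) ^ 2) :=
    E_congr fun l' _ => by ring
  rw [e, E_add, E_add, E_mul_left, E_sub, E_const, E_const, ← hg]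
  ring

lemma var_lower (w₁ w₂ : List V) (hl : w₁.length = w₂.length)
    (hw : ∀ h, ∃ δ : ℕ, 1 ≤ δ ∧ run G h w₁ = fun x => run G h w₂ x + δ) (k : ℕ) (h : V → ℕ) :
    (k : ℝ) * (((Fintype.card V : ℝ)⁻¹) ^ w₁.length / 4) ≤
      E (k * w₁.length) (fun l => ((mx (run G h l) : ℝ) -
        E (k * w₁.length) (fun l => (mx (run G h l) : ℝ))) ^ 2) := by
  set q := w₁.length with hq
  set p := ((Fintype.card V : ℝ)⁻¹) ^ q with hp
  have hp0 : 0 ≤ p := by positivity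
  induction k generalizing h with
  | zero =>
    simp only [Nat.cast_zero, zero_mul]
    exact E_nonneg fun _ _ => sq_nonneg _
  | succ k ih =>
    rw [show (k + 1) * q = q + k * q by ring]
    rw [var_decomp]
    set μ := E (q + k * q) (fun l : List V => (mx (run G h l) : ℝ)) with hμ
    set g : List V → ℝ := fun l => E (k * q) (fun l'' => (mx (run G h (l ++ l'')) : ℝ)) with hg
    have h1 : (k : ℝ) * (p / 4) ≤ E q (fun l => E (k * q) (fun l' =>
        ((mx (run G h (l ++ l')) : ℝ) - E (k * q) (fun l'' => (mx (run G h (l ++ l'')) : ℝ))) ^ 2)) := by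
      rw [← E_const (V := V) q ((k : ℝ) * (p / 4))]
      refine E_mono fun l _ => ?_
      simp only [run_append]
      exact ih (run G h l)
    have h2 := le_E w₁ (f := fun l => (g l - μ) ^ 2) (fun _ _ => sq_nonneg _)
    have h3 := le_E w₂ (f := fun l => (g l - μ) ^ 2) (fun _ _ => sq_nonneg _)
    rw [← hl] at h3
    rw [← hp] at h2 h3
    obtain ⟨δ, hδ, he⟩ := hw h
    have h4 : g w₁ = g w₂ + δ := by
      simp only [hg]
      rw [← E_const (V := V) (k * q) (δ : ℝ), ← E_add]
      refine E_congr fun l _ => ?_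
      rw [run_append, he, run_add, mx_add, run_append]
      push_cast; ring
    have h5 : (1 : ℝ) ≤ δ := by exact_mod_cast hδ
    have h6 : 1 ≤ 2 * ((g w₁ - μ) ^ 2 + (g w₂ - μ) ^ 2) := by
      nlinarith [sq_nonneg ((g w₁ - μ) + (g w₂ - μ))]
    have h7 : p / 4 ≤ E q (fun l => (g l - μ) ^ 2) := by
      nlinarith
    push_cast
    linarith

end Variance

section Link

variable {V : Type} [Fintype V] [Nonempty V]

lemma E_eq_sum {F : Type*} [AddCommGroup F] [Module ℝ F] (n : ℕ) (f : List V → F) :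
    E n f = ∑ u : Fin n → V, (((Fintype.card V : ℝ)⁻¹) ^ n) • f (List.ofFn u) := by
  induction n generalizing f with
  | zero => simp [E]
  | succ n ih =>
    rw [← (Fin.consEquiv (fun _ => V)).sum_comp, Fintype.sum_prod_type]
    simp only [E, ih, Finset.smul_sum, smul_smul]
    refine Finset.sum_congr rfl fun v _ => Finset.sum_congr rfl fun u _ => ?_
    congr 1
    · ring
    · simp [Fin.consEquiv]

lemma measurable_word {Ω : Type} [MeasurableSpace Ω] {μ : Measure Ω} {X : ℕ → Ω → V}
    (hX : IsUniformIID μ X) (n : ℕ) :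
    @Measurable Ω (Fin n → V) _ ⊤ (fun ω (i : Fin n) => X i ω) := by
  letI : MeasurableSpace (Fin n → V) := ⊤
  refine measurable_to_countable' fun u => ?_
  have : (fun ω (i : Fin n) => X i ω) ⁻¹' {u} = ⋂ i : Fin n, {ω | X i ω = u i} := by
    ext ω
    simp [funext_iff]
  rw [this]
  exact MeasurableSet.iInter fun i => hX.1 i (u i)

lemma map_range_eq (X : ℕ → V) (n : ℕ) :
    (List.range n).map X = List.ofFn (fun i : Fin n => X i) := by
  apply List.ext_getElem <;> simp

lemma measurable_comp_word {Ω : Type} [MeasurableSpace Ω] {μ : Measure Ω} {X : ℕ → Ω → V}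
    (hX : IsUniformIID μ X) (n : ℕ) {F : Type*} [MeasurableSpace F] (f : List V → F) :
    Measurable (fun ω => f ((List.range n).map (fun k => X k ω))) := by
  letI : MeasurableSpace (Fin n → V) := ⊤
  have h : Measurable (fun u : Fin n → V => f (List.ofFn u)) := measurable_from_top
  have := h.comp (measurable_word hX n)
  simp only [map_range_eq]
  exact this

lemma integral_word {Ω : Type} [MeasurableSpace Ω] {μ : Measure Ω} [IsProbabilityMeasure μ]
    {X : ℕ → Ω → V} (hX : IsUniformIID μ X) (n : ℕ) {F : Type} [NormedAddCommGroup F]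
    [NormedSpace ℝ F] [CompleteSpace F] (f : List V → F) :
    ∫ ω, f ((List.range n).map (fun k => X k ω)) ∂μ = E n f := by
  letI : MeasurableSpace (Fin n → V) := ⊤
  have : DiscreteMeasurableSpace (Fin n → V) := ⟨fun _ => trivial⟩
  have hm := measurable_word hX n
  simp only [map_range_eq]
  have hsm : StronglyMeasurable (fun u : Fin n → V => f (List.ofFn u)) := .of_discrete
  have : IsProbabilityMeasure (μ.map (fun ω (i : Fin n) => X i ω)) :=
    Measure.isProbabilityMeasure_map hm.aemeasurable
  have h1 : ∫ ω, f (List.ofFn (fun i : Fin n => X i ω)) ∂μ =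
      ∫ u, f (List.ofFn u) ∂(μ.map (fun ω (i : Fin n) => X i ω)) :=
    (integral_map hm.aemeasurable hsm.aestronglyMeasurable).symm
  rw [h1, integral_fintype (Integrable.of_finite), E_eq_sum]
  refine Finset.sum_congr rfl fun u _ => ?_
  congr 1
  rw [measureReal_def, Measure.map_apply hm (MeasurableSet.of_discrete)]
  have h2 : (fun ω (i : Fin n) => X i ω) ⁻¹' {u} = {ω | ∀ k < n, X k ω =
      (fun k => if h : k < n then u ⟨k, h⟩ else Classical.arbitrary V) k} := by
    ext ω
    simp only [Set.mem_preimage, Set.mem_singleton_iff, Set.mem_setOf_eq, funext_iff]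
    constructor
    · intro h k hk
      simp only [hk, dif_pos]
      exact h ⟨k, hk⟩
    · intro h i
      have := h i i.2
      simpa using this
  rw [h2, hX.2]
  simp

open ProbabilityTheory BoundedContinuousFunction in
lemma weak_of_char {Ω : Type} [MeasurableSpace Ω] {μ : Measure Ω} [IsProbabilityMeasure μ]
    {X : ℕ → Ω → V} (hX : IsUniformIID μ X) (T : ℕ → List V → ℝ) (v : ℝ≥0)
    (h : ∀ t : ℝ, Tendsto (fun n : ℕ => E n (fun l => Complex.exp (Complex.I * ((t * T n l : ℝ) : ℂ))))
      atTop (𝓝 (Complex.exp ((-(t ^ 2 * v / 2) : ℝ) : ℂ)))) (f : ℝ →ᵇ ℝ) :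
    Tendsto (fun n : ℕ => ∫ ω, f (T n ((List.range n).map (fun k => X k ω))) ∂μ) atTop
      (𝓝 (∫ x, f x ∂(gaussianReal 0 v))) := by
  have hm : ∀ n, Measurable (fun ω => T n ((List.range n).map (fun k => X k ω))) :=
    fun n => measurable_comp_word hX n (T n)
  let ν : ℕ → ProbabilityMeasure ℝ := fun n =>
    ⟨μ.map (fun ω => T n ((List.range n).map (fun k => X k ω))),
      Measure.isProbabilityMeasure_map (hm n).aemeasurable⟩
  let ν₀ : ProbabilityMeasure ℝ := ⟨gaussianReal 0 v, inferInstance⟩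
  have key : Tendsto ν atTop (𝓝 ν₀) := by
    rw [ProbabilityMeasure.tendsto_iff_tendsto_charFun]
    intro t
    have e0 : charFun (ν₀ : Measure ℝ) t = Complex.exp ((-(t ^ 2 * v / 2) : ℝ) : ℂ) := by
      change charFun (gaussianReal 0 v) t = _
      rw [charFun_gaussianReal]
      congr 1
      push_cast; ring
    rw [e0]
    refine (h t).congr fun n => ?_
    change _ = charFun (μ.map (fun ω => T n ((List.range n).map (fun k => X k ω)))) t
    rw [charFun_apply_real, integral_map (hm n).aemeasurable
      (by apply Continuous.aestronglyMeasurable; fun_prop),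
      ← integral_word hX]
    refine integral_congr_ae (ae_of_all _ fun ω => ?_)
    simp only
    congr 1
    push_cast; ring
  have := (ProbabilityMeasure.tendsto_iff_forall_integral_tendsto.1 key) f
  refine this.congr fun n => ?_
  change ∫ x, f x ∂(μ.map (fun ω => T n ((List.range n).map (fun k => X k ω)))) = _
  rw [integral_map (hm n).aemeasurable f.continuous.aestronglyMeasurable]

lemma exists_iid : ∃ (m : MeasurableSpace (ℕ → V)) (μ : @Measure (ℕ → V) m),
    @IsProbabilityMeasure _ m μ ∧ @IsUniformIID V _ (ℕ → V) m μ (fun n ω => ω n) := by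
  letI : MeasurableSpace V := ⊤
  have : DiscreteMeasurableSpace V := ⟨fun _ => trivial⟩
  let P : Measure V := ProbabilityTheory.uniformOn Set.univ
  have : IsProbabilityMeasure P := inferInstanceAs
    (IsProbabilityMeasure (ProbabilityTheory.uniformOn Set.univ))
  refine ⟨inferInstance, Measure.infinitePi (fun _ : ℕ => P), inferInstance, ?_, ?_⟩
  · intro n v
    have hmeas : Measurable (fun ω : ℕ → V => ω n) := measurable_pi_apply n
    exact hmeas (MeasurableSet.singleton v)
  · intro n f
    have e : {ω : ℕ → V | ∀ k < n, ω k = f k} =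
        Set.pi (Finset.range n : Set ℕ) (fun k => {f k}) := by
      ext ω; simp [Set.mem_pi]
    rw [e, Measure.infinitePi_pi _ (fun i _ => MeasurableSet.singleton _)]
    have : ∀ v : V, P {v} = (Fintype.card V : ℝ≥0∞)⁻¹ := by
      intro v
      change ProbabilityTheory.uniformOn Set.univ {v} = _
      rw [ProbabilityTheory.uniformOn_univ]
      simp
    simp [this]

end Link

section Final

variable {V : Type} [Fintype V] [Nonempty V] (G : SimpleGraph V)

lemma mean_tendsto (γ : ℝ) (hγ : IsGrowthRate G γ) :
    Tendsto (fun n : ℕ => E n (fun l : List V => (M G l : ℝ)) / n) atTop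
      (𝓝 (γ / Fintype.card V)) := by
  obtain ⟨m, μ, hμ, hX⟩ := exists_iid (V := V)
  have h := (hγ.2 μ (fun n ω => ω n) hX).1
  have hN : (0 : ℝ) < Fintype.card V := by exact_mod_cast Fintype.card_pos
  have e : ∀ (n : ℕ) (ω : ℕ → V),
      (⨆ x : V, (heightProcess G (fun _ => 0) (fun k => ω k) n x : ℝ)) =
      (M G ((List.range n).map (fun k => ω k)) : ℝ) := by
    intro n ω
    rw [iSup_eq_mx, heightProcess_eq]; rfl
  simp only [e] at h
  have hD := tendsto_integral_of_dominated_convergence (μ := μ)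
    (F := fun n ω => (Fintype.card V : ℝ) * (M G ((List.range n).map (fun k => ω k)) : ℝ) / n)
    (f := fun _ => γ) (fun _ => (Fintype.card V : ℝ))
    (fun n => (measurable_comp_word hX n
      (fun l => (Fintype.card V : ℝ) * (M G l : ℝ) / n)).aestronglyMeasurable)
    (integrable_const _)
    (fun n => ae_of_all _ fun ω => by
      have h1 := M_le G ((List.range n).map (fun k => ω k))
      simp only [List.length_map, List.length_range] at h1
      have h2 : (M G ((List.range n).map (fun k => ω k)) : ℝ) ≤ n := by exact_mod_cast h1
      rw [Real.norm_of_nonneg (by positivity), mul_div_assoc]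
      exact mul_le_of_le_one_right hN.le (div_le_one_of_le₀ h2 (Nat.cast_nonneg _)))
    h
  simp only [integral_const, probReal_univ, one_smul] at hD
  have h3 := hD.div_const (Fintype.card V : ℝ)
  refine h3.congr fun n => ?_
  rw [integral_word hX n (fun l => (Fintype.card V : ℝ) * (M G l : ℝ) / n)]
  have : E n (fun l => (Fintype.card V : ℝ) * (M G l : ℝ) / n) =
      E n (fun l => ((Fintype.card V : ℝ) / n) * (M G l : ℝ)) := E_congr fun l _ => by ring
  rw [this, E_mul_left]
  field_simp

/-- Perturbation of the characteristic function limit. -/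
lemma char_perturb {Mf : List V → ℝ} {v C' : ℝ} (t : ℝ)
    (h : Tendsto (fun n : ℕ =>
      E n (fun l => Complex.exp (Complex.I * ((t / Real.sqrt n * Z Mf l : ℝ) : ℂ)))) atTop
      (𝓝 (Complex.exp ((-(t ^ 2 * v / 2) : ℝ) : ℂ))))
    (T : ℕ → List V → ℝ) (hT : ∀ n, E n (fun l => |T n l - Z Mf l|) ≤ C') :
    Tendsto (fun n : ℕ =>
      E n (fun l => Complex.exp (Complex.I * ((t * (T n l / Real.sqrt n) : ℝ) : ℂ)))) atTop
      (𝓝 (Complex.exp ((-(t ^ 2 * v / 2) : ℝ) : ℂ))) := by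
  have hd : Tendsto (fun n : ℕ =>
      E n (fun l => Complex.exp (Complex.I * ((t * (T n l / Real.sqrt n) : ℝ) : ℂ))) -
      E n (fun l => Complex.exp (Complex.I * ((t / Real.sqrt n * Z Mf l : ℝ) : ℂ)))) atTop (𝓝 0) := by
    have hl : Tendsto (fun n : ℕ => |t| * C' / Real.sqrt n) atTop (𝓝 0) :=
      (Real.tendsto_sqrt_atTop.comp tendsto_natCast_atTop_atTop).const_div_atTop _
    refine squeeze_zero_norm (fun n => ?_) hl
    refine (norm_E_cexp_sub_le _ _ _).trans ?_
    have e : E n (fun l => |t * (T n l / Real.sqrt n) - t / Real.sqrt n * Z Mf l|) =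
        (|t| / Real.sqrt n) * E n (fun l => |T n l - Z Mf l|) := by
      rw [← E_mul_left]
      refine E_congr fun l _ => ?_
      rw [← abs_of_nonneg (Real.sqrt_nonneg n), ← abs_div, ← abs_mul,
        abs_of_nonneg (Real.sqrt_nonneg n)]
      congr 1; ring
    rw [e, mul_div_right_comm]
    exact mul_le_mul_of_nonneg_left (hT n) (by positivity)
  simpa using hd.add h

end Final

end BD

open ProbabilityTheory BoundedContinuousFunction in
theorem stmt13 {V : Type} [Fintype V] [Nonempty V] (G : SimpleGraph V)
    (hG : G.Connected) (γ : ℝ) (hγ : IsGrowthRate G γ) :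
    ∃ σ2 : ℝ≥0,
      (∀ {Ω : Type} [MeasurableSpace Ω] (μ : Measure Ω) [IsProbabilityMeasure μ]
        (X : ℕ → Ω → V), IsUniformIID μ X →
        (∀ f : ℝ →ᵇ ℝ, Tendsto (fun n : ℕ =>
            ∫ ω, f (((⨆ x : V, (heightProcess G (fun _ => 0) (fun k => X k ω) n x : ℝ)) -
                n * γ / Fintype.card V) / Real.sqrt n) ∂μ)
          atTop (𝓝 (∫ x, f x ∂(gaussianReal 0 σ2)))) ∧
        (∀ f : ℝ →ᵇ ℝ, Tendsto (fun n : ℕ =>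
            ∫ ω, f (((⨅ x : V, (heightProcess G (fun _ => 0) (fun k => X k ω) n x : ℝ)) -
                n * γ / Fintype.card V) / Real.sqrt n) ∂μ)
          atTop (𝓝 (∫ x, f x ∂(gaussianReal 0 σ2))))) ∧
      (σ2 = 0 ↔ Nonempty (G ≃g (⊤ : SimpleGraph V))) := by
  obtain ⟨C, hC, hr⟩ := BD.exists_rng_bound G hG
  have hM : ∀ l l' : List V, |(BD.M G l : ℝ) + (BD.M G l' : ℝ) - (BD.M G (l ++ l') : ℝ)| ≤
      (BD.rng (BD.run G (fun _ => 0) l) : ℝ) := by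
    intro l l'
    have h1 := BD.mx_run_le_M G (BD.run G (fun _ => 0) l) l'
    have h2 := BD.M_le_mx_run G (BD.run G (fun _ => 0) l) l'
    rw [← BD.run_append] at h1 h2
    have h3 := BD.mn_le_mx (BD.run G (fun _ => 0) l)
    have h4 : BD.M G (l ++ l') ≤ BD.M G l + BD.M G l' := h1
    have h5 : BD.M G l + BD.M G l' ≤ BD.M G (l ++ l') + BD.rng (BD.run G (fun _ => 0) l) := by
      unfold BD.rng
      change BD.mx (BD.run G (fun _ => 0) l) + BD.M G l' ≤ BD.mx (BD.run G (fun _ => 0) (l ++ l')) + _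
      omega
    have h4' : (BD.M G (l ++ l') : ℝ) ≤ BD.M G l + BD.M G l' := by exact_mod_cast h4
    have h5' : (BD.M G l : ℝ) + BD.M G l' ≤
        BD.M G (l ++ l') + BD.rng (BD.run G (fun _ => 0) l) := by exact_mod_cast h5
    rw [abs_le]
    constructor <;> linarith [(Nat.cast_nonneg (BD.rng (BD.run G (fun _ => 0) l)) : (0 : ℝ) ≤ _)]
  obtain ⟨σ, hσ0, hσ, hσb⟩ := BD.exists_sigma hC hr hM
  have hmean := BD.mean_approx hr hM _ (BD.mean_tendsto G γ hγ)
  have hchar := BD.char_limit hC hr hM σ hσ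
  have hTmax : ∀ n, BD.E n (fun l : List V => |((BD.M G l : ℝ) - n * γ / Fintype.card V) -
      BD.Z (fun l => (BD.M G l : ℝ)) l|) ≤ 2 * C := by
    intro n
    refine (BD.E_mono (g := fun _ => 2 * C) fun l hl => ?_).trans (BD.E_const n _).le
    have h := hmean n
    simp only [BD.Z, hl]
    rw [mul_div_assoc, show ∀ a b c : ℝ, (a - b) - (a - c) = c - b by intros; ring]
    linarith
  have hTmin : ∀ n, BD.E n (fun l : List V =>
      |((BD.mn (BD.run G (fun _ => 0) l) : ℝ) - n * γ / Fintype.card V) -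
      BD.Z (fun l => (BD.M G l : ℝ)) l|) ≤ 2 * C := by
    intro n
    refine (BD.E_mono (g := fun l => |(BD.rng (BD.run G (fun _ => 0) l) : ℝ)| + C)
      fun l hl => ?_).trans ?_
    · have h := hmean n
      have h3 := BD.mn_le_mx (BD.run G (fun _ => 0) l)
      have h4 : (BD.rng (BD.run G (fun _ => 0) l) : ℝ) =
          (BD.M G l : ℝ) - BD.mn (BD.run G (fun _ => 0) l) := by
        unfold BD.rng BD.M
        push_cast [Nat.cast_sub h3]; ring
      simp only [BD.Z, hl]
      rw [mul_div_assoc, h4, abs_sub_comm (BD.M G l : ℝ)]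
      refine le_trans ?_ (add_le_add le_rfl h)
      refine le_trans (le_of_eq ?_) (abs_add_le _ _)
      congr 1; ring
    · rw [BD.E_add, BD.E_const]
      have := (BD.E_abs_le n _).trans (hr n)
      linarith
  refine ⟨⟨σ ^ 2, sq_nonneg σ⟩, ?_, ?_⟩
  · intro Ω _ μ _ X hX
    refine ⟨fun f => ?_, fun f => ?_⟩
    · have := BD.weak_of_char hX
        (fun n l => ((BD.M G l : ℝ) - n * γ / Fintype.card V) / Real.sqrt n) ⟨σ ^ 2, sq_nonneg σ⟩
        (fun t => BD.char_perturb t (hchar t)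
          (fun n l => (BD.M G l : ℝ) - n * γ / Fintype.card V) hTmax) f
      refine this.congr fun n => ?_
      refine integral_congr_ae (ae_of_all _ fun ω => ?_)
      simp only
      rw [BD.iSup_eq_mx, BD.heightProcess_eq]; rfl
    · have := BD.weak_of_char hX
        (fun n l => ((BD.mn (BD.run G (fun _ => 0) l) : ℝ) - n * γ / Fintype.card V) / Real.sqrt n)
        ⟨σ ^ 2, sq_nonneg σ⟩
        (fun t => BD.char_perturb t (hchar t)
          (fun n l => (BD.mn (BD.run G (fun _ => 0) l) : ℝ) - n * γ / Fintype.card V) hTmin) f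
      refine this.congr fun n => ?_
      refine integral_congr_ae (ae_of_all _ fun ω => ?_)
      simp only
      rw [BD.iInf_eq_mn, BD.heightProcess_eq]
  · constructor
    · intro h0
      have hs : σ = 0 := by
        have h1 : σ ^ 2 = 0 := congrArg (fun x : ℝ≥0 => (x : ℝ)) h0
        exact pow_eq_zero_iff (two_ne_zero) |>.1 h1
      have hcomp : ∀ a b : V, a ≠ b → G.Adj a b := by
        intro a b hab
        by_contra hadj
        obtain ⟨w₁, w₂, hl, hne, hw⟩ := BD.exists_diff G hG hab hadj
        have hq : 1 ≤ w₁.length := List.length_pos_iff.2 hne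
        set p := ((Fintype.card V : ℝ)⁻¹) ^ w₁.length / 4 with hp
        have hN : (0 : ℝ) < Fintype.card V := by exact_mod_cast Fintype.card_pos
        have hp0 : 0 < p := by positivity
        obtain ⟨k, hk⟩ := exists_nat_gt (((5 * C) ^ 2 + 1) / p)
        have hk0 : 1 ≤ k := by
          rcases Nat.eq_zero_or_pos k with rfl | h
          · exfalso
            have : 0 < ((5 * C) ^ 2 + 1) / p := by positivity
            simp only [Nat.cast_zero] at hk
            linarith
          · exact h
        have hv := BD.var_lower G w₁ w₂ hl hw k (fun _ => 0)
        rw [← hp] at hv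
        have hm1 : 1 ≤ k * w₁.length := Nat.mul_pos hk0 hq
        have hb := hσb _ hm1
        set m := k * w₁.length with hm
        have hsm : 0 < Real.sqrt m := Real.sqrt_pos.2 (by exact_mod_cast hm1)
        rw [hs, sub_zero, abs_of_nonneg (div_nonneg (BD.nrm_nonneg _ _) hsm.le),
          div_le_div_iff_of_pos_right hsm] at hb
        have e : BD.E m (fun l : List V => ((BD.mx (BD.run G (fun _ => 0) l) : ℝ) -
            BD.E m (fun l => (BD.mx (BD.run G (fun _ => 0) l) : ℝ))) ^ 2) =
            BD.nrm m (BD.Z (fun l => (BD.M G l : ℝ))) ^ 2 := by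
          rw [BD.nrm_sq]
          refine BD.E_congr fun l hl => ?_
          simp only [BD.Z, hl]; rfl
        rw [e] at hv
        rw [div_lt_iff₀ hp0] at hk
        have := pow_le_pow_left₀ (BD.nrm_nonneg _ _) hb 2
        linarith
      have hT : G = ⊤ := by
        ext a b
        simp only [SimpleGraph.top_adj]
        exact ⟨fun h => h.ne, hcomp a b⟩
      rw [hT]
      exact ⟨SimpleGraph.Iso.refl⟩
    · rintro ⟨e⟩
      have hcomp : ∀ a b : V, a ≠ b → G.Adj a b := by
        intro a b hab
        rw [← e.map_adj_iff, SimpleGraph.top_adj]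
        exact fun h => hab (e.injective h)
      have hz : ∀ m, BD.nrm m (BD.Z (fun l : List V => (BD.M G l : ℝ))) = 0 := by
        intro m
        have e1 : ∀ l : List V, BD.Z (fun l : List V => (BD.M G l : ℝ)) l = 0 := by
          intro l
          simp only [BD.Z]
          rw [BD.E_congr (g := fun _ => (BD.M G l : ℝ)), BD.E_const, sub_self]
          intro l' hl'
          rw [BD.M_complete G hcomp, BD.M_complete G hcomp, hl']
        unfold BD.nrm
        simp only [e1]
        simp [BD.E_const]
      simp only [hz, zero_div] at hσ
      have hs : σ = 0 := tendsto_nhds_unique hσ tendsto_const_nhds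
      apply NNReal.eq
      change σ ^ 2 = 0
      rw [hs]; norm_num
end

section
/- Let G=(V,E) be a finite connected simple graph with growth rate γ(G), let A(G) be its adjacency matrix, and let ρ be the spectral radius (largest eigenvalue) of A(G) + I, where I is the identity matrix indexed by V. Then γ(G) ≤ e·ρ, where e is Euler's number. (Theorem 3.) -/
open MeasureTheory Filter Topology
open scoped ENNReal Classical

section Perron

open Matrix

lemma perron_aux {V : Type} [Fintype V] [DecidableEq V] [Nonempty V]
    (G : SimpleGraph V) [DecidableRel G.Adj] (hG : G.Connected) (ρ : ℝ)
    (hρ : IsGreatest (spectrum ℝ (G.adjMatrix ℝ + 1)) ρ) :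
    0 ≤ ρ ∧ ∃ f : V → ℝ, (∀ x, 0 < f x) ∧
      ∀ x, ((G.adjMatrix ℝ + 1) *ᵥ f) x = ρ * f x := by
  set B : Matrix V V ℝ := G.adjMatrix ℝ + 1 with hB
  have hBnn : ∀ x y, 0 ≤ B x y := by
    intro x y
    simp only [hB, Matrix.add_apply, SimpleGraph.adjMatrix_apply, Matrix.one_apply]
    split_ifs <;> norm_num
  have hBh : B.IsHermitian := by
    rw [Matrix.IsHermitian, Matrix.conjTranspose_eq_transpose_of_trivial]
    simp [hB]
  have halg : (algebraMap ℝ (Matrix V V ℝ) ρ) = ρ • (1 : Matrix V V ℝ) :=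
    Algebra.algebraMap_eq_smul_one ρ
  -- the PSD matrix
  have hP : (ρ • (1 : Matrix V V ℝ) - B).PosSemidef := by
    rw [Matrix.posSemidef_iff_isHermitian_and_spectrum_nonneg]
    refine ⟨?_, ?_⟩
    · refine Matrix.IsHermitian.sub ?_ hBh
      rw [Matrix.IsHermitian, Matrix.conjTranspose_eq_transpose_of_trivial]
      simp
    · intro μ hμ
      have : ρ - μ ∈ spectrum ℝ B := by
        rw [spectrum.mem_iff] at hμ ⊢
        intro h
        apply hμ
        rw [← IsUnit.neg_iff]
        convert h using 1
        rw [map_sub, halg]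
        abel
      have := hρ.2 this
      show 0 ≤ μ
      linarith
  -- eigenvector
  obtain ⟨v, hv0, hv⟩ : ∃ v : V → ℝ, v ≠ 0 ∧ (ρ • (1 : Matrix V V ℝ) - B) *ᵥ v = 0 := by
    rw [Matrix.exists_mulVec_eq_zero_iff]
    have h := hρ.1
    rw [spectrum.mem_iff, halg, Matrix.isUnit_iff_isUnit_det, isUnit_iff_ne_zero, not_not] at h
    exact h
  have hv' : v ⬝ᵥ ((ρ • (1 : Matrix V V ℝ) - B) *ᵥ v) = 0 := by rw [hv]; simp
  set f : V → ℝ := fun x => |v x| with hf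
  have hf0 : ∀ x, 0 ≤ f x := fun x => abs_nonneg _
  have hfB : (ρ • (1 : Matrix V V ℝ) - B) *ᵥ f = 0 := by
    rw [← hP.dotProduct_mulVec_zero_iff]
    apply le_antisymm _ (hP.dotProduct_mulVec_nonneg f)
    rw [← hv']
    simp only [star_trivial, Matrix.sub_mulVec, dotProduct_sub, Matrix.smul_mulVec,
      Matrix.one_mulVec, dotProduct_smul]
    have h1 : f ⬝ᵥ f = v ⬝ᵥ v := by
      simp [dotProduct, hf]
    have h2 : v ⬝ᵥ (B *ᵥ v) ≤ f ⬝ᵥ (B *ᵥ f) := by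
      simp only [dotProduct, Matrix.mulVec, Finset.mul_sum]
      refine Finset.sum_le_sum fun x _ => Finset.sum_le_sum fun y _ => ?_
      calc v x * (B x y * v y) ≤ |v x * (B x y * v y)| := le_abs_self _
        _ = f x * (B x y * f y) := by rw [abs_mul, abs_mul, abs_of_nonneg (hBnn x y)]
    rw [h1]
    linarith
  have hfe : ∀ x, (B *ᵥ f) x = ρ * f x := by
    intro x
    have := congrFun hfB x
    simp only [Matrix.sub_mulVec, Matrix.smul_mulVec, Matrix.one_mulVec, Pi.sub_apply,
      Pi.smul_apply, smul_eq_mul, Pi.zero_apply] at this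
    linarith
  have hstep : ∀ x y, G.Adj x y → f x = 0 → f y = 0 := by
    intro x y hxy hx
    have h := hfe x
    rw [hx, mul_zero] at h
    simp only [Matrix.mulVec, dotProduct] at h
    rw [Finset.sum_eq_zero_iff_of_nonneg (fun z _ => mul_nonneg (hBnn x z) (hf0 z))] at h
    have h3 := h y (Finset.mem_univ _)
    have h4 : B x y = 1 := by
      simp [hB, Matrix.one_apply, hxy, hxy.ne]
    rw [h4, one_mul] at h3
    exact h3
  have hpos : ∀ x, 0 < f x := by
    intro x
    refine lt_of_le_of_ne (hf0 x) fun hx => hv0 ?_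
    ext y
    obtain ⟨w⟩ := hG.preconnected x y
    have : f y = 0 := by
      have hx' := hx.symm
      clear hx
      induction w with
      | nil => exact hx'
      | cons h p ih => exact ih (hstep _ _ h hx')
    simpa [hf] using this
  refine ⟨?_, f, hpos, hfe⟩
  obtain ⟨x⟩ := ‹Nonempty V›
  have h := hfe x
  have h0 : 0 ≤ (B *ᵥ f) x := Finset.sum_nonneg fun z _ => mul_nonneg (hBnn x z) (hf0 z)
  rw [h] at h0
  exact nonneg_of_mul_nonneg_left h0 (hpos x)

end Perron

/-- The exponential functional dominating the height process. -/
noncomputable def zProc {V : Type*} [Fintype V] (G : SimpleGraph V)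
    (X : ℕ → V) : ℕ → V → ℝ≥0∞
  | 0 => fun _ => 1
  | n + 1 => fun x =>
      zProc G X n x + (if X n = x then 1 else 0) * (ENNReal.ofReal (Real.exp 1) *
        ∑ y, (if y = x ∨ G.Adj x y then 1 else 0) * zProc G X n y)

lemma zProc_congr {V : Type*} [Fintype V] (G : SimpleGraph V) (X Y : ℕ → V) (n : ℕ)
    (h : ∀ k < n, X k = Y k) : zProc G X n = zProc G Y n := by
  induction n with
  | zero => rfl
  | succ n ih =>
    have h1 := ih fun k hk => h k (by omega)
    ext x
    simp only [zProc, h1, h n (by omega)]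

lemma exp_height_le {V : Type*} [Fintype V] (G : SimpleGraph V) (X : ℕ → V) (n : ℕ) (x : V) :
    ENNReal.ofReal (Real.exp (heightProcess G (fun _ => 0) X n x)) ≤ zProc G X n x := by
  induction n generalizing x with
  | zero => simp [heightProcess, zProc]
  | succ n ih =>
    simp only [heightProcess, zProc]
    by_cases hx : x = X n
    · rw [if_pos hx, if_pos hx.symm, one_mul]
      obtain ⟨y, -, hy⟩ := Finset.exists_mem_eq_sup Finset.univ ⟨x, Finset.mem_univ _⟩
        (fun y => if y = x ∨ G.Adj x y then heightProcess G (fun _ => 0) X n y else 0)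
      rw [hy]
      have key : ∀ z, (z = x ∨ G.Adj x z) → ENNReal.ofReal (Real.exp
          ((1 + heightProcess G (fun _ => 0) X n z : ℕ) : ℝ)) ≤
          ENNReal.ofReal (Real.exp 1) *
            ∑ y, (if y = x ∨ G.Adj x y then 1 else 0) * zProc G X n y := by
        intro z hz
        push_cast
        rw [Real.exp_add, ENNReal.ofReal_mul (Real.exp_pos _).le]
        gcongr
        refine (ih z).trans ?_
        have := Finset.single_le_sum (f := fun y =>
          (if y = x ∨ G.Adj x y then (1 : ℝ≥0∞) else 0) * zProc G X n y)
          (fun i _ => zero_le) (Finset.mem_univ z)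
        simpa [hz] using this
      refine le_trans ?_ le_add_self
      by_cases hyx : y = x ∨ G.Adj x y
      · rw [if_pos hyx]
        exact key y hyx
      · rw [if_neg hyx]
        refine le_trans ?_ (key x (Or.inl rfl))
        gcongr
        omega
    · rw [if_neg hx]
      exact (ih x).trans le_self_add

section Prob

open ProbabilityTheory

/-- The uniform product measure. -/
noncomputable def muU (V : Type) [Fintype V] [Nonempty V] [MeasurableSpace V] :
    Measure (ℕ → V) :=
  Measure.infinitePi (fun _ : ℕ => uniformOn (Set.univ : Set V))

instance (V : Type) [Fintype V] [Nonempty V] [MeasurableSpace V] :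
    IsProbabilityMeasure (muU V) := by
  unfold muU; infer_instance

lemma unif_singleton (V : Type) [Fintype V] [Nonempty V] [MeasurableSpace V]
    [DiscreteMeasurableSpace V] (v : V) :
    uniformOn (Set.univ : Set V) {v} = (Fintype.card V : ℝ≥0∞)⁻¹ := by
  rw [uniformOn_univ, Measure.count_singleton, one_div]

lemma muU_iid (V : Type) [Fintype V] [Nonempty V] [MeasurableSpace V]
    [DiscreteMeasurableSpace V] : IsUniformIID (muU V) (fun n ω => ω n) := by
  refine ⟨fun n v => ?_, fun n f => ?_⟩
  · exact (measurable_pi_apply n : Measurable fun ω : ℕ → V => ω n)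
      (MeasurableSet.of_discrete (s := ({v} : Set V)))
  · have : {ω : ℕ → V | ∀ k < n, ω k = f k} =
        Set.pi (Finset.range n : Finset ℕ) (fun k => {f k}) := by
      ext ω; simp
    rw [this, muU, Measure.infinitePi_pi _ (fun i _ => MeasurableSet.of_discrete)]
    simp [unif_singleton]

/-- Extension of a finite word to a sequence. -/
noncomputable def extW {V : Type} [Nonempty V] (n : ℕ) (r : Finset.range n → V) : ℕ → V :=
  fun k => if h : k ∈ Finset.range n then r ⟨k, h⟩ else Classical.arbitrary V

lemma zProc_ext {V : Type} [Fintype V] [Nonempty V] (G : SimpleGraph V) (n : ℕ) (ω : ℕ → V) :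
    zProc G ω n = zProc G (extW n (fun i => ω i)) n := by
  apply zProc_congr
  intro k hk
  simp [extW, hk]

lemma zProc_meas {V : Type} [Fintype V] [Nonempty V] [MeasurableSpace V]
    [DiscreteMeasurableSpace V] (G : SimpleGraph V) (n : ℕ) (x : V) :
    Measurable (fun ω : ℕ → V => zProc G ω n x) := by
  have : (fun ω : ℕ → V => zProc G ω n x) =
      (fun r : Finset.range n → V => zProc G (extW n r) n x) ∘ (fun ω i => ω i) := by
    ext ω
    simp only [Function.comp]
    rw [zProc_ext]
  rw [this]
  exact (measurable_of_countable _).comp (by fun_prop)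

lemma lintegral_ind {V : Type} [Fintype V] [Nonempty V] [MeasurableSpace V]
    [DiscreteMeasurableSpace V] (G : SimpleGraph V) (n : ℕ) (x y : V) :
    ∫⁻ ω, (if ω n = x then 1 else 0) * zProc G ω n y ∂(muU V) =
      (Fintype.card V : ℝ≥0∞)⁻¹ * ∫⁻ ω, zProc G ω n y ∂(muU V) := by
  have hind : iIndepFun (fun (i : ℕ) (ω : ℕ → V) => ω i) (muU V) :=
    iIndepFun_infinitePi (X := fun _ v => v) (fun _ => measurable_id)
  have h1 := hind.indepFun_finset {n} (Finset.range n) (by simp) (fun i => by fun_prop)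
  have h2 := h1.comp
    (φ := fun r : (({n} : Finset ℕ) → V) =>
      if r ⟨n, by simp⟩ = x then (1 : ℝ≥0∞) else 0)
    (ψ := fun r : Finset.range n → V => zProc G (extW n r) n y)
    (measurable_of_countable _) (measurable_of_countable _)
  have e2 : ((fun r : Finset.range n → V => zProc G (extW n r) n y) ∘
      (fun (ω : ℕ → V) i => ω i)) = (fun ω : ℕ → V => zProc G ω n y) := by
    ext ω
    simp only [Function.comp]
    rw [← zProc_ext]
  rw [e2] at h2
  have hm : Measurable (fun ω : ℕ → V => if ω n = x then (1 : ℝ≥0∞) else 0) :=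
    (measurable_of_countable (fun v : V => if v = x then (1 : ℝ≥0∞) else 0)).comp
      (measurable_pi_apply n)
  have h3 := lintegral_mul_eq_lintegral_mul_lintegral_of_indepFun''
    (f := fun ω : ℕ → V => if ω n = x then (1 : ℝ≥0∞) else 0)
    hm.aemeasurable (zProc_meas G n y).aemeasurable h2
  rw [h3]
  congr 1
  have hs : MeasurableSet {v : V | v = x} := MeasurableSet.of_discrete
  have h4 : ∫⁻ ω : ℕ → V, (if ω n = x then (1 : ℝ≥0∞) else 0) ∂(muU V) =
      ∫⁻ ω : ℕ → V, Set.indicator ((fun ω : ℕ → V => ω n) ⁻¹' {x}) 1 ω ∂(muU V) := by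
    congr 1
  rw [h4, lintegral_indicator_one (measurable_pi_apply n MeasurableSet.of_discrete),
    ← Measure.map_apply (measurable_pi_apply n) MeasurableSet.of_discrete, muU,
    Measure.infinitePi_map_eval, unif_singleton]

lemma lintegral_step {V : Type} [Fintype V] [Nonempty V] [MeasurableSpace V]
    [DiscreteMeasurableSpace V] (G : SimpleGraph V) (n : ℕ) (x : V) :
    ∫⁻ ω, zProc G ω (n + 1) x ∂(muU V) =
      ∫⁻ ω, zProc G ω n x ∂(muU V) +
        ENNReal.ofReal (Real.exp 1) * (Fintype.card V : ℝ≥0∞)⁻¹ *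
        ∑ y, (if y = x ∨ G.Adj x y then 1 else 0) * ∫⁻ ω, zProc G ω n y ∂(muU V) := by
  have hm : ∀ x : V, Measurable (fun ω : ℕ → V => if ω n = x then (1 : ℝ≥0∞) else 0) :=
    fun x => (measurable_of_countable (fun v : V => if v = x then (1 : ℝ≥0∞) else 0)).comp
      (measurable_pi_apply n)
  have hz := fun y => zProc_meas G n y
  have e : ∀ ω : ℕ → V, zProc G ω (n + 1) x = zProc G ω n x +
      ∑ y, (ENNReal.ofReal (Real.exp 1) * (if y = x ∨ G.Adj x y then 1 else 0)) *
        ((if ω n = x then 1 else 0) * zProc G ω n y) := by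
    intro ω
    simp only [zProc, Finset.mul_sum]
    congr 1
    refine Finset.sum_congr rfl fun y _ => ?_
    ring
  simp_rw [e]
  rw [lintegral_add_left (hz x), lintegral_finsetSum _
    (fun y _ => Measurable.const_mul (f := fun ω : ℕ → V =>
      (if ω n = x then (1 : ℝ≥0∞) else 0) * zProc G ω n y) ((hm x).mul (hz y)) _),
    Finset.mul_sum]
  congr 1
  refine Finset.sum_congr rfl fun y _ => ?_
  rw [lintegral_const_mul (f := fun ω : ℕ → V =>
      (if ω n = x then (1 : ℝ≥0∞) else 0) * zProc G ω n y) _ ((hm x).mul (hz y)), lintegral_ind]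
  ring

lemma lintegral_W {V : Type} [Fintype V] [Nonempty V] [MeasurableSpace V]
    [DiscreteMeasurableSpace V] (G : SimpleGraph V) (f : V → ℝ≥0∞) (ρ : ℝ≥0∞)
    (hf : ∀ y, ∑ x, (if y = x ∨ G.Adj x y then 1 else 0) * f x = ρ * f y) (n : ℕ) :
    ∑ x, f x * ∫⁻ ω, zProc G ω n x ∂(muU V) =
      (1 + ENNReal.ofReal (Real.exp 1) * (Fintype.card V : ℝ≥0∞)⁻¹ * ρ) ^ n * ∑ x, f x := by
  induction n with
  | zero => simp [zProc]
  | succ n ih =>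
    rw [pow_succ', mul_assoc, ← ih]
    simp_rw [lintegral_step, mul_add, Finset.sum_add_distrib]
    rw [add_mul, one_mul]
    congr 1
    simp_rw [Finset.mul_sum]
    rw [Finset.sum_comm]
    refine Finset.sum_congr rfl fun y _ => ?_
    set m := ∫⁻ ω, zProc G ω n y ∂(muU V)
    calc _ = ENNReal.ofReal (Real.exp 1) * (Fintype.card V : ℝ≥0∞)⁻¹ * m *
          ∑ x, (if y = x ∨ G.Adj x y then 1 else 0) * f x := by
          rw [Finset.mul_sum]
          refine Finset.sum_congr rfl fun x _ => ?_
          ring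
      _ = _ := by rw [hf]; ring

end Prob

theorem stmt15 {V : Type} [Fintype V] [DecidableEq V] [Nonempty V]
    (G : SimpleGraph V) [DecidableRel G.Adj] (hG : G.Connected)
    (γ ρ : ℝ) (hγ : IsGrowthRate G γ)
    (hρ : IsGreatest (spectrum ℝ (G.adjMatrix ℝ + 1)) ρ) :
    γ ≤ Real.exp 1 * ρ := by
  by_contra hcon
  push Not at hcon
  obtain ⟨a, ha1, ha2⟩ := exists_between hcon
  obtain ⟨hρ0, f, hfpos, hfe⟩ := perron_aux G hG ρ hρ
  let _ : MeasurableSpace V := ⊤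
  have : DiscreteMeasurableSpace V := ⟨fun _ => trivial⟩
  have hN : (0 : ℝ) < Fintype.card V := by exact_mod_cast Fintype.card_pos
  set N : ℝ := (Fintype.card V : ℝ) with hNdef
  have hf' : ∀ y, ∑ x, (if y = x ∨ G.Adj x y then 1 else 0) * ENNReal.ofReal (f x) =
      ENNReal.ofReal ρ * ENNReal.ofReal (f y) := by
    intro y
    rw [← ENNReal.ofReal_mul hρ0, ← hfe y, Matrix.mulVec, dotProduct,
      ENNReal.ofReal_sum_of_nonneg]
    · refine Finset.sum_congr rfl fun x _ => ?_
      by_cases h1 : y = x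
      · subst h1; simp
      · by_cases h2 : G.Adj y x
        · simp [Matrix.one_apply, h1, h2, h2.symm]
        · have h3 : ¬ G.Adj x y := fun h => h2 h.symm
          simp [Matrix.one_apply, h1, h2, h3]
    · intro x _
      refine mul_nonneg ?_ (hfpos x).le
      simp only [Matrix.add_apply, SimpleGraph.adjMatrix_apply, Matrix.one_apply]
      split_ifs <;> norm_num
  have hW := lintegral_W G (fun x => ENNReal.ofReal (f x)) (ENNReal.ofReal ρ)
    (fun y => by convert hf' y)
  set r : ℝ := Real.exp (-a / N) with hr
  set D : ℕ → (ℕ → V) → ℝ≥0∞ := fun n ω =>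
    ENNReal.ofReal r ^ n * ∑ x, ENNReal.ofReal (f x) * zProc G ω n x with hD
  have hDm : ∀ n, Measurable (D n) := fun n =>
    (Finset.measurable_sum _ fun x _ => (zProc_meas G n x).const_mul _).const_mul _
  have hDi : ∀ n, ∫⁻ ω, D n ω ∂(muU V) =
      ENNReal.ofReal (r * (1 + Real.exp 1 / N * ρ)) ^ n * ∑ x, ENNReal.ofReal (f x) := by
    intro n
    simp only [hD]
    rw [lintegral_const_mul _
      (Finset.measurable_sum _ fun x _ => (zProc_meas G n x).const_mul _),
      lintegral_finsetSum _ (fun x _ => (zProc_meas G n x).const_mul _)]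
    simp_rw [lintegral_const_mul _ (zProc_meas G n _)]
    rw [hW, ← mul_assoc, ← mul_pow, ENNReal.ofReal_mul (Real.exp_pos _).le,
      ENNReal.ofReal_add zero_le_one (by positivity), ENNReal.ofReal_mul (by positivity),
      ENNReal.ofReal_div_of_pos hN, hNdef, ENNReal.ofReal_natCast, ENNReal.ofReal_one,
      ENNReal.div_eq_inv_mul, mul_comm (Fintype.card V : ℝ≥0∞)⁻¹]
  have hq : r * (1 + Real.exp 1 / N * ρ) < 1 := by
    have h1 : 1 + Real.exp 1 / N * ρ ≤ Real.exp (Real.exp 1 / N * ρ) := by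
      rw [add_comm]; exact Real.add_one_le_exp _
    calc _ ≤ r * Real.exp (Real.exp 1 / N * ρ) := by gcongr
      _ = Real.exp ((Real.exp 1 * ρ - a) / N) := by
        rw [hr, ← Real.exp_add]; congr 1; field_simp; ring
      _ < 1 := by
        rw [Real.exp_lt_one_iff]
        exact div_neg_of_neg_of_pos (by linarith) hN
  have hsum : ∫⁻ ω, ∑' n, D n ω ∂(muU V) ≠ ∞ := by
    rw [lintegral_tsum fun n => (hDm n).aemeasurable]
    simp_rw [hDi]
    rw [ENNReal.tsum_mul_right, ENNReal.tsum_geometric]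
    refine ENNReal.mul_ne_top ?_ ?_
    · rw [ENNReal.inv_ne_top]
      have : ENNReal.ofReal (r * (1 + Real.exp 1 / N * ρ)) < 1 := by
        rwa [ENNReal.ofReal_lt_one]
      exact (tsub_pos_of_lt this).ne'
    · simp [ENNReal.sum_eq_top]
  have hae := ae_lt_top (Measurable.ennreal_tsum hDm) hsum
  obtain ⟨ω, hω1, hω2⟩ := (hae.and (hγ.2 (muU V) _ (muU_iid V)).1).exists
  have hD0 := ENNReal.tendsto_atTop_zero_of_tsum_ne_top hω1.ne
  obtain ⟨x0, hx0⟩ := Finite.exists_min f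
  have hev1 := hD0.eventually (gt_mem_nhds (ENNReal.ofReal_pos.2 (hfpos x0)))
  have hev2 := hω2.eventually (lt_mem_nhds ha2)
  obtain ⟨n, ⟨hn1, hn2⟩, hn3⟩ := ((hev1.and hev2).and (eventually_gt_atTop 0)).exists
  have hn : (0 : ℝ) < n := by exact_mod_cast hn3
  rw [lt_div_iff₀ hn, mul_comm (Fintype.card V : ℝ), ← div_lt_iff₀ hN] at hn2
  obtain ⟨x, hx⟩ := exists_lt_of_lt_ciSup hn2
  refine absurd hn1 (not_lt.2 ?_)
  have hz := exp_height_le G ω n x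
  calc ENNReal.ofReal (f x0) ≤ ENNReal.ofReal (f x) := ENNReal.ofReal_le_ofReal (hx0 x)
    _ ≤ ENNReal.ofReal (r ^ n * (f x *
          Real.exp (heightProcess G (fun _ => 0) ω n x))) := by
        apply ENNReal.ofReal_le_ofReal
        have : 1 ≤ r ^ n * Real.exp (heightProcess G (fun _ => 0) ω n x) := by
          rw [hr, ← Real.exp_nat_mul, ← Real.exp_add, Real.one_le_exp_iff]
          have e : (n : ℝ) * (-a / N) = -(a * n / N) := by ring
          rw [e]
          linarith
        nlinarith [hfpos x]
    _ = ENNReal.ofReal r ^ n * (ENNReal.ofReal (f x) *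
          ENNReal.ofReal (Real.exp (heightProcess G (fun _ => 0) ω n x))) := by
        rw [ENNReal.ofReal_mul (by positivity), ENNReal.ofReal_mul (hfpos x).le,
          ENNReal.ofReal_pow (by positivity)]
    _ ≤ ENNReal.ofReal r ^ n * (ENNReal.ofReal (f x) * zProc G ω n x) := by gcongr
    _ ≤ D n ω := by
        simp only [hD]
        gcongr
        exact Finset.single_le_sum (f := fun x => ENNReal.ofReal (f x) * zProc G ω n x)
          (fun i _ => zero_le) (Finset.mem_univ x)
end

section
/- Let (G_n)_{n≥1} be a sequence of finite connected simple graphs with growth rates γ(G_n). Then γ(G_n) → ∞ as n → ∞ if and only if Δ(G_n) → ∞ as n → ∞, where Δ(G_n) is the maximal degree of G_n. (Corollary 1.) -/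
open MeasureTheory Filter Topology
open scoped ENNReal Classical

/-- One step of ballistic deposition. -/
noncomputable def bstep {V : Type} [Fintype V] (G : SimpleGraph V) (v : V) (s : V → ℕ) : V → ℕ :=
  fun x =>
      if x = v then
        1 + Finset.univ.sup (fun y => if y = x ∨ G.Adj x y then s y else 0)
      else s x

/-- Expectation after `n` uniform steps. -/
noncomputable def avg {V S : Type} [Fintype V] (st : V → S → S) : ℕ → (S → ℝ) → S → ℝ
  | 0, F, s => F s
  | n + 1, F, s => (Fintype.card V : ℝ)⁻¹ * ∑ v, avg st n F (st v s)

section avgs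
variable {V S S' : Type} [Fintype V]

theorem avg_coupling (st : V → S → S) (st' : V → S' → S') (R : S → S' → Prop)
    (hR : ∀ v s s', R s s' → R (st v s) (st' v s')) (F : S → ℝ) (F' : S' → ℝ)
    (hF : ∀ s s', R s s' → F s ≤ F' s') (n : ℕ) :
    ∀ s s', R s s' → avg st n F s ≤ avg st' n F' s' := by
  induction n with
  | zero => exact hF
  | succ n ih =>
    intro s s' h
    simp only [avg]
    gcongr with v
    exact ih _ _ (hR v _ _ h)

theorem avg_mono (st : V → S → S) (F F' : S → ℝ) (h : ∀ s, F s ≤ F' s) (n : ℕ) (s : S) :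
    avg st n F s ≤ avg st n F' s :=
  avg_coupling st st (fun a b => a = b) (by rintro v s _ rfl; rfl) F F'
    (by rintro s _ rfl; exact h s) n s s rfl

theorem avg_const [Nonempty V] (st : V → S → S) (c : ℝ) (n : ℕ) (s : S) :
    avg st n (fun _ => c) s = c := by
  induction n generalizing s with
  | zero => rfl
  | succ n ih => simp [avg, ih]

theorem avg_add (st : V → S → S) (F F' : S → ℝ) (n : ℕ) (s : S) :
    avg st n (fun s => F s + F' s) s = avg st n F s + avg st n F' s := by
  induction n generalizing s with
  | zero => rfl
  | succ n ih => simp [avg, ih, Finset.sum_add_distrib, mul_add]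

theorem avg_smul (st : V → S → S) (c : ℝ) (F : S → ℝ) (n : ℕ) (s : S) :
    avg st n (fun s => c * F s) s = c * avg st n F s := by
  induction n generalizing s with
  | zero => rfl
  | succ n ih => simp only [avg, ih, ← Finset.mul_sum]; ring

theorem avg_sum {ι : Type} (st : V → S → S) (t : Finset ι) (F : ι → S → ℝ) (n : ℕ) (s : S) :
    avg st n (fun s => ∑ i ∈ t, F i s) s = ∑ i ∈ t, avg st n (F i) s := by
  induction n generalizing s with
  | zero => rfl
  | succ n ih => simp only [avg, ih, Finset.mul_sum]; rw [Finset.sum_comm]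

theorem avg_comp (st : V → S → S) (F : S → ℝ) (m n : ℕ) (s : S) :
    avg st (m + n) F s = avg st m (avg st n F) s := by
  induction m generalizing s with
  | zero => simp [avg]
  | succ m ih =>
    rw [Nat.succ_add]
    simp only [avg, ih]

/-- If one step multiplies `F` by at most `c`. -/
theorem avg_eig_le (st : V → S → S) (F : S → ℝ) (c : ℝ) (hc : 0 ≤ c)
    (h : ∀ s, (Fintype.card V : ℝ)⁻¹ * ∑ v, F (st v s) ≤ c * F s) (n : ℕ) (s : S) :
    avg st n F s ≤ c ^ n * F s := by
  induction n generalizing s with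
  | zero => simp [avg]
  | succ n ih =>
    simp only [avg]
    calc _ ≤ (Fintype.card V : ℝ)⁻¹ * ∑ v, c ^ n * F (st v s) := by
          gcongr with v; exact ih _
      _ = c ^ n * ((Fintype.card V : ℝ)⁻¹ * ∑ v, F (st v s)) := by
          rw [← Finset.mul_sum]; ring
      _ ≤ c ^ n * (c * F s) := mul_le_mul_of_nonneg_left (h s) (by positivity)
      _ = _ := by ring

theorem avg_eig (st : V → S → S) (F : S → ℝ) (c : ℝ)
    (h : ∀ s, (Fintype.card V : ℝ)⁻¹ * ∑ v, F (st v s) = c * F s) (n : ℕ) (s : S) :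
    avg st n F s = c ^ n * F s := by
  induction n generalizing s with
  | zero => simp [avg]
  | succ n ih =>
    simp only [avg, ih]
    rw [← Finset.mul_sum]
    calc _ = c ^ n * ((Fintype.card V : ℝ)⁻¹ * ∑ v, F (st v s)) := by ring
      _ = _ := by rw [h]; ring

end avgs

section bd
variable {V : Type} [Fintype V] (G : SimpleGraph V)

theorem bstep_self (v y : V) (s : V → ℕ) (h : y = v ∨ G.Adj v y) : 1 + s y ≤ bstep G v s v := by
  simp only [bstep, if_true]
  have := Finset.le_sup (f := fun y => if y = v ∨ G.Adj v y then s y else 0) (Finset.mem_univ y)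
  simp only [h, if_true] at this
  omega

theorem bstep_ne (v x : V) (s : V → ℕ) (h : x ≠ v) : bstep G v s x = s x := by
  simp [bstep, h]

theorem bstep_ge (v x : V) (s : V → ℕ) : s x ≤ bstep G v s x := by
  by_cases h : x = v
  · subst h
    have := bstep_self G x x s (Or.inl rfl)
    omega
  · rw [bstep_ne G v x s h]

theorem avg_ge_self [Nonempty V] (x : V) (n : ℕ) (s : V → ℕ) :
    (s x : ℝ) ≤ avg (bstep G) n (fun s => (s x : ℝ)) s := by
  have := avg_coupling (V := V) (fun _ (u : Unit) => u) (bstep G) (fun _ t => s x ≤ t x)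
    (fun v _ t h => h.trans (bstep_ge G v x t)) (fun _ => (s x : ℝ)) (fun t => (t x : ℝ))
    (fun _ t h => by exact_mod_cast h) n () s le_rfl
  rwa [avg_const] at this

/-- second half -/
theorem avg_center [Nonempty V] (x y : V) (hxy : G.Adj x y) (m : ℕ) (n : ℕ) :
    ∀ s : V → ℕ, s x ≤ m → m ≤ s y →
    (s x : ℝ) + (1 - (1 - (Fintype.card V : ℝ)⁻¹) ^ n) * (m - s x) ≤
      avg (bstep G) n (fun s => (s x : ℝ)) s := by
  induction n with
  | zero => intro s _ _; simp [avg]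
  | succ n ih =>
    intro s h1 h2
    simp only [avg]
    have hN : (0 : ℝ) < Fintype.card V := by exact_mod_cast Fintype.card_pos
    set N : ℝ := ((Fintype.card V : ℕ) : ℝ) with hNdef
    set r : ℝ := (1 - (1 - N⁻¹) ^ n) with hr
    set B : ℝ := (s x : ℝ) + r * (m - s x) with hB
    have key : ∀ v, (if v = x then (m : ℝ) else B) ≤ avg (bstep G) n (fun s => (s x : ℝ)) (bstep G v s) := by
      intro v
      split_ifs with h
      · subst h
        refine le_trans ?_ (avg_ge_self G v n _)
        have := bstep_self G v y s (Or.inr hxy)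
        exact_mod_cast (by omega : m ≤ bstep G v s v)
      · have e := bstep_ne G v x s (Ne.symm h)
        have := ih (bstep G v s) (by omega) (h2.trans (bstep_ge G v y s))
        rw [e] at this
        exact this
    have hs : ∑ v, (if v = x then (m : ℝ) else B) = N * B + (m - B) := by
      have : ∀ v : V, (if v = x then (m : ℝ) else B) = B + if v = x then (m - B) else 0 := by
        intro v; split_ifs <;> ring
      simp only [this, Finset.sum_add_distrib]
      simp [hNdef]
    calc _ = N⁻¹ * ∑ v, (if v = x then (m : ℝ) else B) := by
          rw [hs, hB, hr, pow_succ]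
          field_simp
          ring
      _ ≤ _ := by gcongr with v; exact key v

/-- counting process -/
noncomputable def cstep (v : V) (c : V → ℕ) : V → ℕ := fun x => if x = v then c x + 1 else c x

theorem avg_pow [Nonempty V] (z : ℝ) (y : V) (n : ℕ) :
    avg cstep n (fun c : V → ℕ => z ^ c y) (fun _ => 0) = (1 + (z - 1) / Fintype.card V) ^ n := by
  have hN : (0 : ℝ) < Fintype.card V := by exact_mod_cast Fintype.card_pos
  rw [avg_eig cstep _ (1 + (z - 1) / Fintype.card V)]
  · simp
  · intro c
    have : ∀ v : V, z ^ (cstep v c y) = z ^ c y + if y = v then (z - 1) * z ^ c y else 0 := by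
      intro v; simp only [cstep]; split_ifs
      · ring
      · ring
    simp only [this, Finset.sum_add_distrib]
    simp
    field_simp

theorem avg_pow2 [Nonempty V] (z : ℝ) (y y' : V) (h : y ≠ y') (n : ℕ) :
    avg cstep n (fun c : V → ℕ => z ^ c y * z ^ c y') (fun _ => 0) =
      (1 + 2 * (z - 1) / Fintype.card V) ^ n := by
  have hN : (0 : ℝ) < Fintype.card V := by exact_mod_cast Fintype.card_pos
  rw [avg_eig cstep _ (1 + 2 * (z - 1) / Fintype.card V)]
  · simp
  · intro c
    have : ∀ v : V, z ^ (cstep v c y) * z ^ (cstep v c y') = z ^ c y * z ^ c y' +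
        ((if y = v then (z - 1) * (z ^ c y * z ^ c y') else 0) +
          if y' = v then (z - 1) * (z ^ c y * z ^ c y') else 0) := by
      intro v; simp only [cstep]; split_ifs with h1 h2
      · exact absurd (h1.trans h2.symm) h
      · ring
      · ring
      · ring
    simp only [this, Finset.sum_add_distrib]
    simp
    field_simp
    ring

theorem w_bound (K N : ℕ) (hN : K + 1 ≤ N) (z : ℝ) (hz : z = 2 * (2 * (K + 1)) ^ (K + 1)) :
    2 * z ^ K ≤ (1 + (z - 1) / N) ^ N := by
  have hA : (1 : ℝ) ≤ 2 * (K + 1) := by linarith [(Nat.cast_nonneg K : (0 : ℝ) ≤ K)]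
  have hz1 : 1 ≤ z := by
    rw [hz]; linarith [one_le_pow₀ hA (n := K + 1)]
  have hNpos : (0 : ℝ) < N := by exact_mod_cast (by omega : 0 < N)
  obtain ⟨q, hq⟩ : ∃ q, q = N / (K + 1) := ⟨_, rfl⟩
  have hq1 : q * (K + 1) ≤ N := hq ▸ Nat.div_mul_le_self _ _
  have hq0 : 1 ≤ q := by rw [hq]; exact (Nat.one_le_div_iff (by omega)).2 hN
  have hq2 : N ≤ 2 * (q * (K + 1)) := by
    have := Nat.lt_div_mul_add (a := N) (b := K + 1) (by omega)
    rw [← hq] at this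
    nlinarith
  have hq2' : (N : ℝ) ≤ q * (2 * (K + 1)) := by
    have : (N : ℝ) ≤ ((2 * (q * (K + 1)) : ℕ) : ℝ) := by exact_mod_cast hq2
    push_cast at this; linarith
  have hu : 0 ≤ (z - 1) / N := div_nonneg (by linarith) hNpos.le
  have hApos : (0 : ℝ) < 2 * (K + 1) := by linarith
  calc 2 * z ^ K = (z / (2 * (K + 1))) ^ (K + 1) := by
        rw [div_pow, pow_succ z]
        nth_rw 3 [hz]
        field_simp
    _ ≤ (1 + q * ((z - 1) / N)) ^ (K + 1) := by
        gcongr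
        have : (z - 1) / (2 * (K + 1)) ≤ q * ((z - 1) / N) := by
          rw [div_le_iff₀ hApos, ← mul_div_assoc, div_mul_eq_mul_div, le_div_iff₀ hNpos]
          nlinarith
        have h2 : 1 / (2 * ((K : ℝ) + 1)) ≤ 1 := by rw [div_le_one hApos]; exact hA
        have : z / (2 * (K + 1)) = (z - 1) / (2 * (K + 1)) + 1 / (2 * ((K : ℝ) + 1)) := by ring
        linarith
    _ ≤ ((1 + (z - 1) / N) ^ q) ^ (K + 1) := by
        gcongr
        exact one_add_mul_le_pow (by linarith) q
    _ = (1 + (z - 1) / N) ^ (q * (K + 1)) := by rw [pow_mul]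
    _ ≤ _ := by
        apply pow_le_pow_right₀ _ hq1
        linarith

theorem one_add_div_pow_le (a : ℝ) (N m : ℕ) (hN : 0 < N) (ha : 0 ≤ a) :
    (1 + a / N) ^ (N * m) ≤ Real.exp (a * m) := by
  have hN' : (0 : ℝ) < N := by exact_mod_cast hN
  calc (1 + a / N) ^ (N * m) ≤ (Real.exp (a / N)) ^ (N * m) := by
        gcongr
        linarith [Real.add_one_le_exp (a / N)]
    _ = _ := by
        rw [← Real.exp_nat_mul]
        congr 1
        push_cast
        field_simp

/-- Some leaf is hit `K` times with probability at least one half. -/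
theorem prob_leaf [Nonempty V] (K : ℕ) (hK : K + 1 ≤ Fintype.card V) (z : ℝ)
    (hz : z = 2 * (2 * (K + 1)) ^ (K + 1)) (t : Finset V)
    (ht : 8 * Real.exp (z ^ 2) ≤ t.card) :
    1 / 2 ≤ avg cstep (Fintype.card V)
      (fun c : V → ℕ => if ∃ y ∈ t, K ≤ c y then (1 : ℝ) else 0) (fun _ => 0) := by
  have hA : (1 : ℝ) ≤ 2 * (K + 1) := by linarith [(Nat.cast_nonneg K : (0 : ℝ) ≤ K)]
  have hz1 : 1 ≤ z := by
    rw [hz]; linarith [one_le_pow₀ hA (n := K + 1)]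
  have hw := w_bound K _ hK z hz
  have hN : (0 : ℝ) < Fintype.card V := by exact_mod_cast Fintype.card_pos
  set N := Fintype.card V with hNdef
  set w : ℝ := (1 + (z - 1) / N) ^ N with hwdef
  set D : ℝ := ((t.card : ℕ) : ℝ) with hD
  have hD0 : 0 < D := lt_of_lt_of_le (by positivity) ht
  have hu : 0 ≤ (z - 1) / N := div_nonneg (by linarith) hN.le
  have hw1 : 1 ≤ w := one_le_pow₀ (by linarith)
  have hEZ : avg cstep N (fun c : V → ℕ => ∑ y ∈ t, z ^ c y) (fun _ => 0) = D * w := by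
    rw [avg_sum]
    simp only [hNdef, avg_pow]
    simp [hD, hwdef, hNdef]
  have hEZ2 : avg cstep N (fun c : V → ℕ => (∑ y ∈ t, z ^ c y) * ∑ y ∈ t, z ^ c y) (fun _ => 0)
      ≤ D * Real.exp (z ^ 2) + D ^ 2 * w ^ 2 := by
    simp only [Finset.sum_mul_sum]
    rw [avg_sum]
    have : ∀ y y' : V, avg cstep N (fun c : V → ℕ => z ^ c y * z ^ c y') (fun _ => 0) ≤
        (if y = y' then Real.exp (z ^ 2) else 0) + w ^ 2 := by
      intro y y'
      split_ifs with h
      · subst h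
        have e := avg_pow (z ^ 2) y N
        have e2 := one_add_div_pow_le (z ^ 2 - 1) N 1 Fintype.card_pos (by nlinarith)
        have e3 : (fun c : V → ℕ => z ^ c y * z ^ c y) = fun c : V → ℕ => (z ^ 2) ^ c y := by
          funext c; rw [← mul_pow, sq]
        rw [e3, e]
        rw [mul_one] at e2
        refine e2.trans ?_
        have : Real.exp ((z ^ 2 - 1) * (1 : ℕ)) ≤ Real.exp (z ^ 2) := by
          apply Real.exp_le_exp.2; push_cast; linarith
        nlinarith
      · rw [avg_pow2 z y y' h, hwdef, ← pow_mul, mul_comm N 2, pow_mul, zero_add]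
        gcongr
        rw [← hNdef, mul_div_assoc]
        nlinarith
    calc _ ≤ ∑ y ∈ t, ∑ y' ∈ t, ((if y = y' then Real.exp (z ^ 2) else 0) + w ^ 2) := by
          gcongr with y hy
          rw [avg_sum]
          gcongr with y' hy'
          exact this y y'
      _ = _ := by
          simp only [Finset.sum_add_distrib]
          simp [hD, Finset.sum_ite_mem]
          ring
  have hpt : ∀ c : V → ℕ, (1 + (-4 / (D * w) ^ 2) * ((∑ y ∈ t, z ^ c y) * ∑ y ∈ t, z ^ c y) +
      ((8 / (D * w)) * (∑ y ∈ t, z ^ c y) + (-4))) ≤ if ∃ y ∈ t, K ≤ c y then (1 : ℝ) else 0 := by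
    intro c
    set Z := ∑ y ∈ t, z ^ c y with hZ
    have hDw : 0 < D * w := by positivity
    have e : (1 + (-4 / (D * w) ^ 2) * (Z * Z) + ((8 / (D * w)) * Z + (-4))) =
        1 - 4 * (Z / (D * w) - 1) ^ 2 := by
      field_simp
      ring
    rw [e]
    split_ifs with h
    · nlinarith [sq_nonneg (Z / (D * w) - 1)]
    · push Not at h
      have : Z ≤ D * z ^ K := by
        calc Z ≤ ∑ y ∈ t, z ^ K := by
              rw [hZ]; gcongr with y hy
              exact (h y hy).le
          _ = _ := by simp [hD]
      have : Z / (D * w) ≤ 1 / 2 := by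
        rw [div_le_iff₀ hDw]
        nlinarith
      nlinarith
  refine le_trans ?_ (avg_mono cstep _ _ hpt N _)
  rw [avg_add, avg_add, avg_add, avg_smul, avg_smul, avg_const, avg_const, hEZ]
  have hDw : 0 < D * w := by positivity
  have h1 : -4 / (D * w) ^ 2 * (D * Real.exp (z ^ 2) + D ^ 2 * w ^ 2) ≤ -4 / (D * w) ^ 2 *
    avg cstep N (fun c : V → ℕ => (∑ y ∈ t, z ^ c y) * ∑ y ∈ t, z ^ c y) (fun _ => 0) := by
    apply mul_le_mul_of_nonpos_left hEZ2
    apply div_nonpos_of_nonpos_of_nonneg (by norm_num) (by positivity)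
  have h2 : -4 / (D * w) ^ 2 * (D * Real.exp (z ^ 2) + D ^ 2 * w ^ 2) =
      -4 - 4 * Real.exp (z ^ 2) / (D * w ^ 2) := by
    field_simp
    ring
  have h3 : 4 * Real.exp (z ^ 2) / (D * w ^ 2) ≤ 1 / 2 := by
    rw [div_le_iff₀ (by positivity)]
    nlinarith [one_le_pow₀ hw1 (n := 2)]
  have h4 : 8 / (D * w) * (D * w) = 8 := by field_simp
  linarith

theorem block [Nonempty V] (K : ℕ) (hK : K + 1 ≤ Fintype.card V) (z : ℝ)
    (hz : z = 2 * (2 * (K + 1)) ^ (K + 1)) (x : V) (t : Finset V) (htx : ∀ y ∈ t, G.Adj x y)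
    (ht : 8 * Real.exp (z ^ 2) ≤ t.card) (s : V → ℕ) :
    (s x : ℝ) + K / 4 ≤
      avg (bstep G) (Fintype.card V + Fintype.card V) (fun s => (s x : ℝ)) s := by
  rw [avg_comp]
  have hN : (1 : ℝ) ≤ Fintype.card V := by exact_mod_cast Fintype.card_pos
  set N := Fintype.card V with hNdef
  have hr : (1 - (N : ℝ)⁻¹) ^ N ≤ 1 / 2 := by
    have h1 : (1 - (N : ℝ)⁻¹) ≤ Real.exp (-(N : ℝ)⁻¹) := by
      linarith [Real.add_one_le_exp (-(N : ℝ)⁻¹)]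
    have h0 : 0 ≤ (1 - (N : ℝ)⁻¹) := by
      have := inv_le_one_of_one_le₀ hN
      linarith
    calc _ ≤ (Real.exp (-(N : ℝ)⁻¹)) ^ N := by gcongr
      _ = Real.exp (-1) := by
        rw [← Real.exp_nat_mul]; congr 1; field_simp
      _ ≤ 1 / 2 := by
        rw [Real.exp_neg, one_div]
        apply inv_anti₀ (by norm_num)
        linarith [Real.add_one_le_exp (1 : ℝ)]
  have := avg_coupling (V := V) cstep (bstep G)
    (fun c s' => s x ≤ s' x ∧ ∀ y ∈ t, c y = 0 ∨ s x + c y ≤ s' y)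
    (by
      rintro v c s' ⟨h1, h2⟩
      refine ⟨h1.trans (bstep_ge G v x s'), fun y hy => ?_⟩
      simp only [cstep]
      split_ifs with h
      · subst h
        right
        rcases h2 y hy with h3 | h3
        · have := bstep_self G y x s' (Or.inr (htx y hy).symm)
          omega
        · have := bstep_self G y y s' (Or.inl rfl)
          omega
      · rw [bstep_ne G v y s' h]; exact h2 y hy)
    (fun c => (s x : ℝ) + (K / 2) * (if ∃ y ∈ t, K ≤ c y then (1 : ℝ) else 0))
    (avg (bstep G) N (fun s => (s x : ℝ)))
    (by
      rintro c s' ⟨h1, h2⟩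
      have h0 := avg_ge_self G x N s'
      have h1' : (s x : ℝ) ≤ s' x := by exact_mod_cast h1
      have hK0 : (0 : ℝ) ≤ K := Nat.cast_nonneg K
      split_ifs with h
      · obtain ⟨y, hy, hyK⟩ := h
        by_cases hx : s x + K ≤ s' x
        · have : (s x : ℝ) + K ≤ s' x := by exact_mod_cast hx
          linarith
        · push Not at hx
          rcases Nat.eq_zero_or_pos K with h3 | h3
          · subst h3; simp; linarith
          have h4 : s x + K ≤ s' y := by
            rcases h2 y hy with h5 | h5 <;> omega
          have := avg_center G x y (htx y hy) (s x + K) N s' hx.le h4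
          refine le_trans ?_ this
          have h5 : (s' x : ℝ) ≤ s x + K := by exact_mod_cast hx.le
          rw [← hNdef]
          push_cast
          nlinarith
      · linarith) N (fun _ => 0) s ⟨le_rfl, fun y _ => Or.inl rfl⟩
  refine le_trans ?_ this
  rw [avg_add, avg_smul, avg_const]
  have := prob_leaf K hK z hz t ht
  have hK0 : (0 : ℝ) ≤ K := Nat.cast_nonneg K
  nlinarith

theorem blocks [Nonempty V] (K : ℕ) (hK : K + 1 ≤ Fintype.card V) (z : ℝ)
    (hz : z = 2 * (2 * (K + 1)) ^ (K + 1)) (x : V) (t : Finset V) (htx : ∀ y ∈ t, G.Adj x y)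
    (ht : 8 * Real.exp (z ^ 2) ≤ t.card) (m : ℕ) (s : V → ℕ) :
    (s x : ℝ) + m * (K / 4) ≤
      avg (bstep G) (m * (Fintype.card V + Fintype.card V)) (fun s => (s x : ℝ)) s := by
  induction m generalizing s with
  | zero => simp [avg]
  | succ m ih =>
    rw [Nat.succ_mul, avg_comp]
    have := avg_mono (bstep G) _ _ (block G K hK z hz x t htx ht)
      (m * (Fintype.card V + Fintype.card V)) s
    rw [avg_add, avg_const] at this
    have := ih s
    push_cast
    linarith

theorem avg_max_lower [Nonempty V] (K : ℕ) (hK : K + 1 ≤ Fintype.card V) (z : ℝ)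
    (hz : z = 2 * (2 * (K + 1)) ^ (K + 1)) (x : V) (t : Finset V) (htx : ∀ y ∈ t, G.Adj x y)
    (ht : 8 * Real.exp (z ^ 2) ≤ t.card) (m : ℕ) :
    m * ((K : ℝ) / 4) ≤
      avg (bstep G) (m * (Fintype.card V + Fintype.card V)) (fun s => ⨆ x, (s x : ℝ))
        (fun _ => 0) := by
  have := blocks G K hK z hz x t htx ht m (fun _ => 0)
  simp only [Nat.cast_zero, zero_add] at this
  refine this.trans (avg_mono _ _ _ (fun s => ?_) _ _)
  exact le_ciSup (f := fun x => (s x : ℝ)) (Set.finite_range _).bddAbove x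

theorem avg_exp [Nonempty V] (d : ℕ)
    (hd : ∀ y, (Finset.univ.filter (fun x => y = x ∨ G.Adj x y)).card ≤ d) (n : ℕ) (s : V → ℕ) :
    avg (bstep G) n (fun s => ∑ x, (2 : ℝ) ^ s x) s ≤
      (1 + 2 * d / Fintype.card V) ^ n * ∑ x, (2 : ℝ) ^ s x := by
  have hN : (0 : ℝ) < Fintype.card V := by exact_mod_cast Fintype.card_pos
  apply avg_eig_le (bstep G) (fun s : V → ℕ => ∑ x, (2 : ℝ) ^ s x) _ (by positivity)
  intro s
  have h1 : ∀ v x, (2 : ℝ) ^ bstep G v s x ≤ 2 ^ s x +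
      if x = v then 2 * ∑ y, (if y = x ∨ G.Adj x y then (2 : ℝ) ^ s y else 0) else 0 := by
    intro v x
    by_cases h : x = v
    · subst h
      simp only [bstep, if_true]
      obtain ⟨y, -, hy⟩ := Finset.exists_mem_eq_sup (Finset.univ : Finset V) Finset.univ_nonempty
        (fun y => if y = x ∨ G.Adj x y then s y else 0)
      rw [hy, pow_add, pow_one]
      have hnn : ∀ y ∈ (Finset.univ : Finset V),
          0 ≤ (if y = x ∨ G.Adj x y then (2 : ℝ) ^ s y else 0) := by
        intro y _; split_ifs <;> positivity
      split_ifs with h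
      · have := Finset.single_le_sum hnn (Finset.mem_univ y)
        rw [if_pos h] at this
        have : (0 : ℝ) < 2 ^ s x := by positivity
        linarith
      · have := Finset.single_le_sum hnn (Finset.mem_univ x)
        rw [if_pos (Or.inl rfl)] at this
        have : (1 : ℝ) ≤ 2 ^ s x := one_le_pow₀ (by norm_num)
        linarith
    · simp [bstep_ne G v x s h, h]
  have h2 : ∑ v, ∑ x, (2 : ℝ) ^ bstep G v s x ≤
      (Fintype.card V + 2 * d) * ∑ x, (2 : ℝ) ^ s x := by
    calc _ ≤ ∑ v, ∑ x, ((2 : ℝ) ^ s x +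
      if x = v then 2 * ∑ y, (if y = x ∨ G.Adj x y then (2 : ℝ) ^ s y else 0) else 0) := by
          gcongr with v _ x _; exact h1 v x
      _ = Fintype.card V * ∑ x, (2 : ℝ) ^ s x +
          2 * ∑ v, ∑ y, (if y = v ∨ G.Adj v y then (2 : ℝ) ^ s y else 0) := by
          simp only [Finset.sum_add_distrib, Finset.mul_sum]
          simp [Finset.mul_sum]
      _ ≤ Fintype.card V * ∑ x, (2 : ℝ) ^ s x + 2 * ∑ y, d * (2 : ℝ) ^ s y := by
          rw [Finset.sum_comm]
          gcongr with y _
          rw [← Finset.sum_filter, Finset.sum_const, nsmul_eq_mul]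
          gcongr
          exact hd y
      _ = _ := by rw [← Finset.mul_sum]; ring
  calc _ ≤ (Fintype.card V : ℝ)⁻¹ * ((Fintype.card V + 2 * d) * ∑ x, (2 : ℝ) ^ s x) := by
        gcongr
    _ = _ := by field_simp

theorem avg_max_upper [Nonempty V] (d : ℕ)
    (hd : ∀ y, (Finset.univ.filter (fun x => y = x ∨ G.Adj x y)).card ≤ d) (m : ℕ) :
    avg (bstep G) (Fintype.card V * m) (fun s => ⨆ x, (s x : ℝ)) (fun _ => 0) ≤
      4 * d * m + Fintype.card V := by
  have hpt : ∀ s : V → ℕ, (⨆ x, (s x : ℝ)) ≤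
      4 * d * m + (2 ^ (4 * d * m))⁻¹ * ∑ x, (2 : ℝ) ^ s x := by
    intro s
    apply ciSup_le
    intro x
    have h1 : (2 : ℝ) ^ s x ≤ ∑ x, (2 : ℝ) ^ s x :=
      Finset.single_le_sum (f := fun x => (2 : ℝ) ^ s x) (fun _ _ => by positivity)
        (Finset.mem_univ x)
    have h2 : (s x : ℝ) ≤ 4 * d * m + (2 ^ (4 * d * m))⁻¹ * (2 : ℝ) ^ s x := by
      by_cases h : s x ≤ 4 * d * m
      · have : (s x : ℝ) ≤ 4 * d * m := by exact_mod_cast h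
        have : (0 : ℝ) ≤ (2 ^ (4 * d * m))⁻¹ * (2 : ℝ) ^ s x := by positivity
        linarith
      · obtain ⟨k, hk⟩ := Nat.exists_eq_add_of_le (not_le.1 h).le
        rw [hk, pow_add, inv_mul_cancel_left₀ (by positivity)]
        push_cast
        have : (k : ℝ) ≤ 2 ^ k := by exact_mod_cast Nat.lt_two_pow_self.le
        linarith
    refine h2.trans ?_
    gcongr
  refine (avg_mono _ _ _ hpt _ _).trans ?_
  rw [avg_add, avg_smul _ ((2 ^ (4 * d * m))⁻¹), avg_const]
  gcongr
  have h := avg_exp G d hd (Fintype.card V * m) (fun _ => 0)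
  have h2 := one_add_div_pow_le (2 * d) (Fintype.card V) m Fintype.card_pos (by positivity)
  have h3 : Real.exp (2 * d * m) ≤ 2 ^ (4 * d * m) := by
    have : Real.exp 1 ≤ 4 := by linarith [Real.exp_one_lt_d9]
    calc Real.exp (2 * d * m) = (Real.exp 1) ^ (2 * d * m) := by
          rw [← Real.exp_nat_mul]; push_cast; ring_nf
      _ ≤ 4 ^ (2 * d * m) := by gcongr
      _ = _ := by
        rw [show (4 : ℝ) = 2 ^ 2 by norm_num, ← pow_mul]; ring_nf
  simp only [pow_zero, Finset.sum_const, Finset.card_univ, nsmul_eq_mul, mul_one] at h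
  rw [inv_mul_le_iff₀ (by positivity)]
  refine h.trans ?_
  gcongr
  exact h2.trans h3

end bd
section link
variable {V : Type} [Fintype V] (G : SimpleGraph V)

theorem heightProcess_shift (s : V → ℕ) (X : ℕ → V) (n : ℕ) :
    heightProcess G s X (n + 1) = heightProcess G (bstep G (X 0) s) (fun k => X (k + 1)) n := by
  induction n with
  | zero => rfl
  | succ n ih =>
    have h1 : heightProcess G s X (n + 1 + 1) = bstep G (X (n + 1)) (heightProcess G s X (n + 1)) :=
      rfl
    rw [h1, ih]
    rfl

/-- Run the process along a finite word. -/
noncomputable def brun : (n : ℕ) → (Fin n → V) → (V → ℕ) → (V → ℕ)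
  | 0, _, s => s
  | n + 1, f, s => brun n (fun k => f k.succ) (bstep G (f 0) s)

theorem heightProcess_eq_brun (n : ℕ) (s : V → ℕ) (X : ℕ → V) :
    heightProcess G s X n = brun G n (fun k => X k) s := by
  induction n generalizing s X with
  | zero => rfl
  | succ n ih =>
    rw [heightProcess_shift, ih]
    rfl

theorem avg_eq_sum (F : (V → ℕ) → ℝ) (n : ℕ) (s : V → ℕ) :
    avg (bstep G) n F s =
      ((Fintype.card V : ℝ)⁻¹) ^ n * ∑ f : Fin n → V, F (brun G n f s) := by
  induction n generalizing s with
  | zero => simp [avg, brun]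
  | succ n ih =>
    simp only [avg, ih]
    rw [← (Fin.consEquiv (fun _ => V)).sum_comp, Fintype.sum_prod_type, ← Finset.mul_sum, pow_succ']
    rw [mul_assoc]
    rfl

theorem integral_height [MeasurableSpace V] [MeasurableSingletonClass V]
    (μ : Measure (ℕ → V)) [IsProbabilityMeasure μ]
    (hμ : ∀ (n : ℕ) (f : ℕ → V), μ {ω | ∀ k < n, ω k = f k} = (Fintype.card V : ℝ≥0∞)⁻¹ ^ n)
    [Nonempty V] (F : (V → ℕ) → ℝ) (n : ℕ) (s : V → ℕ) :
    ∫ ω, F (heightProcess G s ω n) ∂μ = avg (bstep G) n F s := by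
  have hm : Measurable (fun (ω : ℕ → V) (k : Fin n) => ω k) := by fun_prop
  simp only [heightProcess_eq_brun]
  have hΦ : StronglyMeasurable (fun f : Fin n → V => F (brun G n f s)) :=
    (measurable_of_countable _).stronglyMeasurable
  rw [← integral_map (φ := fun (ω : ℕ → V) (k : Fin n) => ω k) hm.aemeasurable
    (f := fun f : Fin n → V => F (brun G n f s)) hΦ.aestronglyMeasurable]
  have := Measure.isProbabilityMeasure_map (μ := μ) hm.aemeasurable
  rw [integral_fintype (Integrable.of_finite), avg_eq_sum, Finset.mul_sum]
  refine Finset.sum_congr rfl fun f _ => ?_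
  rw [smul_eq_mul]
  congr 1
  rw [measureReal_def, Measure.map_apply hm (measurableSet_singleton f)]
  have : (fun (ω : ℕ → V) (k : Fin n) => ω k) ⁻¹' {f} =
      {ω | ∀ k < n, ω k = (fun k => if h : k < n then f ⟨k, h⟩ else Classical.arbitrary V) k} := by
    ext ω
    simp only [Set.mem_preimage, Set.mem_singleton_iff, Set.mem_ofPred_eq, funext_iff]
    constructor
    · intro h k hk
      simp only [hk, dif_pos]
      exact h ⟨k, hk⟩
    · intro h k
      have := h k k.2
      simpa using this
  rw [this, hμ]
  simp

theorem height_le (s : V → ℕ) (X : ℕ → V) (hs : ∀ x, s x = 0) (n : ℕ) :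
    ∀ x, heightProcess G s X n x ≤ n := by
  induction n with
  | zero => intro x; simp [heightProcess, hs]
  | succ n ih =>
    intro x
    simp only [heightProcess]
    split_ifs
    · have : (Finset.univ.sup (fun y =>
          if y = x ∨ G.Adj x y then heightProcess G s X n y else 0)) ≤ n := by
        apply Finset.sup_le
        intro y _
        split_ifs
        · exact ih y
        · omega
      omega
    · exact (ih x).trans (by omega)

theorem growth_tendsto [Nonempty V] (γ : ℝ) (h : IsGrowthRate G γ) :
    Tendsto (fun n : ℕ => (Fintype.card V : ℝ) / n *
      avg (bstep G) n (fun s => ⨆ x, (s x : ℝ)) (fun _ => 0)) atTop (𝓝 γ) := by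
  let : MeasurableSpace V := ⊤
  have : DiscreteMeasurableSpace V := ⟨fun _ => trivial⟩
  let μ : Measure (ℕ → V) := Measure.infinitePi (fun _ => (PMF.uniformOfFintype V).toMeasure)
  have : IsProbabilityMeasure μ := by infer_instance
  have hμ : ∀ (n : ℕ) (f : ℕ → V),
      μ {ω | ∀ k < n, ω k = f k} = (Fintype.card V : ℝ≥0∞)⁻¹ ^ n := by
    intro n f
    have : {ω : ℕ → V | ∀ k < n, ω k = f k} = Set.pi (Finset.range n) (fun k => {f k}) := by
      ext ω; simp [Set.mem_pi]
    rw [this, Measure.infinitePi_pi _ (fun i _ => measurableSet_singleton _)]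
    simp
  have hX : IsUniformIID μ (fun k (ω : ℕ → V) => ω k) := by
    refine ⟨fun n v => ?_, hμ⟩
    have hm : Measurable (fun ω : ℕ → V => ω n) := measurable_pi_apply n
    exact hm (measurableSet_singleton v)
  obtain ⟨h1, -⟩ := h.2 μ _ hX
  have key := tendsto_integral_of_dominated_convergence (μ := μ)
    (F := fun (n : ℕ) (ω : ℕ → V) => (Fintype.card V : ℝ) *
          (⨆ x : V, (heightProcess G (fun _ => 0) (fun k => ω k) n x : ℝ)) / n)
    (f := fun _ => γ) (fun _ => (Fintype.card V : ℝ)) ?_ (integrable_const _) ?_ h1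
  · simp only [integral_const, probReal_univ, one_smul] at key
    refine key.congr fun n => ?_
    rw [← integral_height G μ hμ, ← integral_const_mul]
    congr 1
    funext ω
    ring
  · intro n
    have hm : Measurable (fun (ω : ℕ → V) (k : Fin n) => ω k) := by fun_prop
    have hΦ : Measurable (fun f : Fin n → V => (Fintype.card V : ℝ) *
        (⨆ x : V, (brun G n f (fun _ => 0) x : ℝ)) / n) := measurable_of_countable _
    have := hΦ.comp hm
    simp only [heightProcess_eq_brun]
    exact this.aestronglyMeasurable
  · intro n
    refine Eventually.of_forall fun ω => ?_
    have h0 : 0 ≤ (⨆ x : V, (heightProcess G (fun _ => 0) (fun k => ω k) n x : ℝ)) :=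
      Real.iSup_nonneg fun x => Nat.cast_nonneg _
    have h1 : (⨆ x : V, (heightProcess G (fun _ => 0) (fun k => ω k) n x : ℝ)) ≤ n :=
      ciSup_le fun x => by exact_mod_cast height_le G _ _ (fun _ => rfl) n x
    rw [Real.norm_of_nonneg (by positivity)]
    rcases Nat.eq_zero_or_pos n with hn | hn
    · subst hn; simp
    · have : (0 : ℝ) < n := by exact_mod_cast hn
      rw [div_le_iff₀ this]
      gcongr

theorem growth_upper [Nonempty V] (γ : ℝ) (h : IsGrowthRate G γ) (d : ℕ)
    (hd : ∀ y, (Finset.univ.filter (fun x => y = x ∨ G.Adj x y)).card ≤ d) : γ ≤ 4 * d := by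
  have h1 := growth_tendsto G γ h
  have hN : 0 < Fintype.card V := Fintype.card_pos
  have hN' : (0 : ℝ) < Fintype.card V := by exact_mod_cast hN
  have h2 : Tendsto (fun m : ℕ => Fintype.card V * m) atTop atTop :=
    tendsto_id.const_mul_atTop' hN
  have h3 : Tendsto (fun m : ℕ => 4 * (d : ℝ) + (Fintype.card V : ℝ) / m) atTop (𝓝 (4 * d + 0)) :=
    tendsto_const_nhds.add (tendsto_const_div_atTop_nhds_zero_nat _)
  rw [add_zero] at h3
  refine le_of_tendsto_of_tendsto (h1.comp h2) h3 ?_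
  filter_upwards [eventually_gt_atTop 0] with m hm
  have hm' : (0 : ℝ) < m := by exact_mod_cast hm
  have := avg_max_upper G d hd m
  simp only [Function.comp]
  push_cast
  calc _ ≤ (Fintype.card V : ℝ) / (Fintype.card V * m) * (4 * d * m + Fintype.card V) := by
        gcongr
    _ = _ := by field_simp

theorem growth_lower [Nonempty V] (γ : ℝ) (h : IsGrowthRate G γ)
    (K : ℕ) (hK : K + 1 ≤ Fintype.card V) (z : ℝ)
    (hz : z = 2 * (2 * (K + 1)) ^ (K + 1)) (x : V) (t : Finset V) (htx : ∀ y ∈ t, G.Adj x y)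
    (ht : 8 * Real.exp (z ^ 2) ≤ t.card) : (K : ℝ) / 8 ≤ γ := by
  have h1 := growth_tendsto G γ h
  have hN : 0 < Fintype.card V := Fintype.card_pos
  have hN' : (0 : ℝ) < Fintype.card V := by exact_mod_cast hN
  have h2 : Tendsto (fun m : ℕ => m * (Fintype.card V + Fintype.card V)) atTop atTop :=
    tendsto_id.atTop_mul_const' (by omega)
  refine ge_of_tendsto (h1.comp h2) ?_
  filter_upwards [eventually_gt_atTop 0] with m hm
  have hm' : (0 : ℝ) < m := by exact_mod_cast hm
  have := avg_max_lower G K hK z hz x t htx ht m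
  simp only [Function.comp]
  push_cast
  calc (K : ℝ) / 8 = (Fintype.card V : ℝ) / (m * (Fintype.card V + Fintype.card V)) *
        (m * ((K : ℝ) / 4)) := by
        field_simp; ring
    _ ≤ _ := by gcongr

end link

theorem stmt17 (V : ℕ → Type) [∀ k, Fintype (V k)]
    (G : ∀ k, SimpleGraph (V k)) [∀ k, DecidableRel (G k).Adj] (γ : ℕ → ℝ)
    (hconn : ∀ k, (G k).Connected)
    (hγ : ∀ k, IsGrowthRate (G k) (γ k)) :
    Tendsto γ atTop atTop ↔ Tendsto (fun k => (G k).maxDegree) atTop atTop := by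
  constructor
  · intro h
    have hle : ∀ k, γ k ≤ 4 * (((G k).maxDegree + 1 : ℕ) : ℝ) := by
      intro k
      have := (hconn k).nonempty
      apply growth_upper (G k) _ (hγ k)
      intro y
      refine (Finset.card_le_card (t := insert y ((G k).neighborFinset y)) ?_).trans
        ((Finset.card_insert_le _ _).trans ?_)
      · intro x hx
        simp only [Finset.mem_filter, Finset.mem_univ, true_and] at hx
        rw [Finset.mem_insert, SimpleGraph.mem_neighborFinset]
        exact hx.imp Eq.symm SimpleGraph.Adj.symm
      rw [SimpleGraph.card_neighborFinset_eq_degree]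
      exact Nat.succ_le_succ ((G k).degree_le_maxDegree y)
    rw [tendsto_atTop]
    intro b
    filter_upwards [h.eventually_ge_atTop (4 * ((b + 1 : ℕ) : ℝ))] with k hk
    have := hk.trans (hle k)
    have h2 : ((b + 1 : ℕ) : ℝ) ≤ (((G k).maxDegree + 1 : ℕ) : ℝ) := by linarith
    have h3 := Nat.cast_le.1 h2
    omega
  · intro h
    rw [tendsto_atTop]
    intro b
    obtain ⟨K, hKb⟩ := exists_nat_ge (8 * b)
    obtain ⟨D, hD⟩ := exists_nat_ge
      (8 * Real.exp ((2 * (2 * ((K : ℝ) + 1)) ^ (K + 1)) ^ 2))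
    filter_upwards [h.eventually_ge_atTop (D + K)] with k hk
    have := (hconn k).nonempty
    obtain ⟨x, hx⟩ := (G k).exists_maximal_degree_vertex
    have hlt := (G k).degree_lt_card_verts x
    have := growth_lower (G k) (γ k) (hγ k) K (by omega) _ rfl x ((G k).neighborFinset x)
      (fun y hy => by rwa [SimpleGraph.mem_neighborFinset] at hy)
      (by
        rw [SimpleGraph.card_neighborFinset_eq_degree]
        refine hD.trans ?_
        exact_mod_cast (by omega : D ≤ (G k).degree x))
    linarith
end
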